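/- arXiv:math/0201175 — 10 statements merged into one kernel-verified Lean document; each statement's English description precedes it below -/
import Mathlib

section
/- Let A → C be a homomorphism of commutative rings, let f ∈ A, and let M be a C-module (regarded also as an A-module via A → C). Assume: (a) the localization M_f = M[f⁻¹] is a flat module over C_f = C[f⁻¹]; (b) M/fM is a flat module over C/fC; (c) Tor₁^A(C, A/fA) = 0; and (d) Tor_i^A(M, A/fA) = 0 for i = 1, 2. Then M is a flat C-module. -/
open CategoryTheory

/-!
Write `g` for the image of `f` in `C`. For every `C`-module `N`, the kernel and the cokernel of
`N → N_g` are `g`-power torsion, so `Tor₁(N, M)` vanishes as soon as `Tor₁(N_g, M)` does and `Tor₁`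
and `Tor₂` against `M` vanish on all `g`-power torsion modules. The former holds because `M_g` is
flat over `C_g`. For the latter, filtering by powers of `g` reduces to modules over `C/gC`; these
are controlled by the flatness of `M/gM` over `C/gC` once `Tor₁(C/gC, M)` and `Tor₂(C/gC, M)`
vanish over `C`. Finally, if `P` is a projective resolution of `A/fA` over `A`, then `M ⊗_A P` is
`M ⊗_C (C ⊗_A P)`, and the vanishing of `Tor₁^A(C, A/fA)` makes `C ⊗_A P` exact in degree one, so
these two groups vanish because the corresponding ones over `A` do.
-/

section

open Function LinearMap TensorProduct

/-- The first syzygy module of `M` for the free presentation on all elements of `M`. It shifts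
degrees: `Tor₂(N, M)` is `Tor₁(N, syzygy R M)`. -/
noncomputable abbrev syzygy (R M : Type*) [CommRing R] [AddCommGroup M] [Module R M] :
    Submodule R (M →₀ R) :=
  ker (Finsupp.linearCombination R (id : M → M))

/-- The vanishing of `Tor₁(N, M)`, expressed through the free presentation of `M` on all of its
elements. This makes sense for modules in arbitrary universes and avoids derived functors. -/
def TorOneVanishes (R N M : Type*) [CommRing R] [AddCommGroup N] [Module R N] [AddCommGroup M]
    [Module R M] : Prop :=
  Injective (lTensor N (syzygy R M).subtype)

section Presentations

variable {R : Type*} [CommRing R]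
variable {N₁ N₂ N₃ M K F L G N : Type*} [AddCommGroup N₁] [AddCommGroup N₂] [AddCommGroup N₃]
  [AddCommGroup M] [AddCommGroup K] [AddCommGroup F] [AddCommGroup L] [AddCommGroup G]
  [AddCommGroup N] [Module R N₁] [Module R N₂] [Module R N₃] [Module R M] [Module R K] [Module R F]
  [Module R L] [Module R G] [Module R N]

variable (R M) in
theorem exact_syzygy :
    Exact (syzygy R M).subtype (Finsupp.linearCombination R (id : M → M)) :=
  exact_subtype_ker_map _

theorem rTensor_injective_of_exact_of_exact_of_lTensor_injective
    {a : N₁ →ₗ[R] N₂} {b : N₂ →ₗ[R] N₃} {i : K →ₗ[R] F} {p : F →ₗ[R] M}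
    (hab : Exact a b) (hb : Surjective b) (hip : Exact i p) (hp : Surjective p)
    (hi : Injective (lTensor N₃ i)) (ha : Injective (rTensor F a)) :
    Injective (rTensor M a) := by
  rw [← lTensor_inj_iff_rTensor_inj] at ha ⊢
  exact lTensor_injective_of_exact_of_exact_of_rTensor_injective hip hp hab hb
    ((lTensor_inj_iff_rTensor_inj _ _).1 hi) ha

theorem lTensor_comp_rTensor_injective [Module.Flat R F] {a : N₁ →ₗ[R] N₂} {i : K →ₗ[R] F}
    (ha : Injective a) (hi : Injective (lTensor N₁ i)) :
    Injective (lTensor N₂ i ∘ₗ rTensor K a) := by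
  rw [lTensor_comp_rTensor, ← rTensor_comp_lTensor]
  exact (Module.Flat.rTensor_preserves_injective_linearMap a ha).comp hi

theorem rTensor_injective_iff_lTensor_injective_of_flat [Module.Flat R G] [Module.Flat R F]
    {a : L →ₗ[R] G} {b : G →ₗ[R] N} {i : K →ₗ[R] F} {p : F →ₗ[R] M}
    (ha : Injective a) (hab : Exact a b) (hb : Surjective b)
    (hi : Injective i) (hip : Exact i p) (hp : Surjective p) :
    Injective (rTensor M a) ↔ Injective (lTensor N i) :=
  ⟨fun h ↦ lTensor_injective_of_exact_of_exact_of_rTensor_injective hab hb hip hp h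
      (Module.Flat.lTensor_preserves_injective_linearMap i hi),
    fun h ↦ rTensor_injective_of_exact_of_exact_of_lTensor_injective hab hb hip hp h
      (Module.Flat.rTensor_preserves_injective_linearMap a ha)⟩

theorem torOneVanishes_iff_rTensor_injective [Module.Flat R G] {a : L →ₗ[R] G} {b : G →ₗ[R] N}
    (ha : Injective a) (hab : Exact a b) (hb : Surjective b) :
    TorOneVanishes R N M ↔ Injective (rTensor M a) :=
  (rTensor_injective_iff_lTensor_injective_of_flat ha hab hb (Submodule.injective_subtype _)
    (exact_syzygy R M) (Finsupp.linearCombination_id_surjective R M)).symm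

namespace TorOneVanishes

theorem of_flat_left [Module.Flat R N] : TorOneVanishes R N M :=
  Module.Flat.lTensor_preserves_injective_linearMap _ (Submodule.injective_subtype _)

theorem rTensor_injective {a : N₁ →ₗ[R] N₂} {b : N₂ →ₗ[R] N₃} (ha : Injective a)
    (hab : Exact a b) (hb : Surjective b) (h : TorOneVanishes R N₃ M) :
    Injective (rTensor M a) :=
  rTensor_injective_of_exact_of_exact_of_lTensor_injective (K := syzygy R M) (F := M →₀ R)
    hab hb (exact_syzygy R M) (Finsupp.linearCombination_id_surjective R M) h
    (Module.Flat.rTensor_preserves_injective_linearMap a ha)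

theorem of_rTensor_injective {a : N₁ →ₗ[R] N₂} {b : N₂ →ₗ[R] N₃} (hab : Exact a b)
    (hb : Surjective b) (ha : Injective (rTensor M a)) (h : TorOneVanishes R N₂ M) :
    TorOneVanishes R N₃ M :=
  lTensor_injective_of_exact_of_exact_of_rTensor_injective (N₁ := syzygy R M)
    (N₂ := M →₀ R) hab hb (exact_syzygy R M) (Finsupp.linearCombination_id_surjective R M) ha h

theorem of_exact {a : N₁ →ₗ[R] N₂} {b : N₂ →ₗ[R] N₃} (ha : Injective a) (hab : Exact a b)
    (hb : Surjective b) (h₁ : TorOneVanishes R N₁ M) (h₃ : TorOneVanishes R N₃ M) :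
    TorOneVanishes R N₂ M := by
  refine (injective_iff_map_eq_zero _).2 fun x hx ↦ ?_
  have hbx : lTensor N₃ (syzygy R M).subtype (rTensor (syzygy R M) b x) = 0 := by
    rw [← LinearMap.comp_apply, lTensor_comp_rTensor, ← rTensor_comp_lTensor, LinearMap.comp_apply,
      hx, map_zero]
  obtain ⟨y, rfl⟩ := (rTensor_exact (syzygy R M) hab hb x).1 ((map_eq_zero_iff _ h₃).1 hbx)
  have hy : y = 0 := (map_eq_zero_iff _
    (lTensor_comp_rTensor_injective (K := syzygy R M) (F := M →₀ R) ha h₁)).1 hx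
  rw [hy, map_zero]

theorem rTensor_syzygy_injective {a : N₁ →ₗ[R] N₂} (ha : Injective a)
    (h : TorOneVanishes R N₁ M) : Injective (rTensor (syzygy R M) a) :=
  Injective.of_comp (lTensor_comp_rTensor_injective (K := syzygy R M) (F := M →₀ R) ha h)

theorem of_rTensor_syzygy_injective {a : N₁ →ₗ[R] N₂}
    (ha : Injective (rTensor (syzygy R M) a)) (h : TorOneVanishes R N₂ M) :
    TorOneVanishes R N₁ M := by
  have hcomp : Injective (rTensor (M →₀ R) a ∘ₗ lTensor N₁ (syzygy R M).subtype) := by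
    rw [rTensor_comp_lTensor, ← lTensor_comp_rTensor]
    exact h.comp ha
  exact Injective.of_comp hcomp

theorem congr_left (e : N₁ ≃ₗ[R] N₂) (h : TorOneVanishes R N₁ M) : TorOneVanishes R N₂ M :=
  of_rTensor_syzygy_injective (a := e.symm.toLinearMap) (LinearEquiv.rTensor _ e.symm).injective h

-- Shifts degrees in both arguments: `Tor₁(L, M)`, `Tor₂(N, M)` and `Tor₁(N, syzygy R M)` agree.
theorem syzygy_right [Module.Flat R G] {a : L →ₗ[R] G} {b : G →ₗ[R] N} (ha : Injective a)
    (hab : Exact a b) (hb : Surjective b) (h : TorOneVanishes R L M) :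
    TorOneVanishes R N (syzygy R M) :=
  (torOneVanishes_iff_rTensor_injective ha hab hb).2 (h.rTensor_syzygy_injective ha)

-- Here `hcoker` says `Tor₂(N₂ ⧸ range l, M) = 0`, so that `Tor₁(range l, M)` embeds in
-- `Tor₁(N₂, M)`.
theorem of_ker_of_range_quotient (l : N₁ →ₗ[R] N₂) (hker : TorOneVanishes R (ker l) M)
    (h₂ : TorOneVanishes R N₂ M) (hcoker : TorOneVanishes R (N₂ ⧸ range l) (syzygy R M)) :
    TorOneVanishes R N₁ M := by
  have hrange : TorOneVanishes R (range l) M :=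
    of_rTensor_syzygy_injective (hcoker.rTensor_injective (Submodule.injective_subtype _)
      (exact_subtype_mkQ _) (Submodule.mkQ_surjective _)) h₂
  have hexact : Exact (ker l).subtype l.rangeRestrict := by
    rw [LinearMap.exact_iff, ker_rangeRestrict, Submodule.range_subtype]
  exact hker.of_exact (Submodule.injective_subtype _) hexact (surjective_rangeRestrict l) hrange

theorem of_forall_finite_submodule
    (h : ∀ N' : Submodule R N, Module.Finite R N' → TorOneVanishes R N' M) :
    TorOneVanishes R N M := by
  refine (injective_iff_map_eq_zero _).2 fun x hx ↦ ?_
  obtain ⟨N', hfin, hx'⟩ := exists_finite_submodule_left_of_setFinite {x} (Set.finite_singleton x)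
  obtain ⟨y, rfl⟩ := hx' rfl
  have hy : y = 0 := (map_eq_zero_iff _ (lTensor_comp_rTensor_injective (K := syzygy R M)
    (F := M →₀ R) N'.injective_subtype (h N' hfin))).1 hx
  rw [hy, map_zero]

end TorOneVanishes

theorem flat_of_forall_torOneVanishes_quotient
    (h : ∀ I : Ideal R, TorOneVanishes R (R ⧸ I) M) : Module.Flat R M :=
  Module.Flat.iff_rTensor_injective'.2 fun I ↦
    (h I).rTensor_injective I.injective_subtype (exact_subtype_mkQ I) I.mkQ_surjective

theorem flat_of_exact_of_flat [Module.Flat R F] [Module.Flat R M] {i : K →ₗ[R] F} {p : F →ₗ[R] M}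
    (hi : Injective i) (hip : Exact i p) (hp : Surjective p) : Module.Flat R K := by
  refine Module.Flat.iff_rTensor_injective'.2 fun I ↦ ?_
  have hI : Injective (lTensor I i) := lTensor_injective_of_exact_of_flat p hp i hi hip I
  exact Injective.of_comp (lTensor_comp_rTensor_injective I.injective_subtype hI)

theorem exact_range_subtype {i : K →ₗ[R] F} {p : F →ₗ[R] M} (hip : Exact i p) :
    Exact (range i).subtype p := by
  rw [LinearMap.exact_iff, Submodule.range_subtype, hip.linearMap_ker_eq]

theorem lTensor_range_subtype_injective_of_exact {Q₂ Q₁ Q₀ : Type*} [AddCommGroup Q₂]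
    [AddCommGroup Q₁] [AddCommGroup Q₀] [Module R Q₂] [Module R Q₁] [Module R Q₀]
    {d₂ : Q₂ →ₗ[R] Q₁} {d₁ : Q₁ →ₗ[R] Q₀} (hd : d₁ ∘ₗ d₂ = 0)
    (h : Exact (lTensor M d₂) (lTensor M d₁)) :
    Injective (lTensor M (range d₁).subtype) := by
  refine (injective_iff_map_eq_zero _).2 fun x hx ↦ ?_
  obtain ⟨y, rfl⟩ := lTensor_surjective M (surjective_rangeRestrict d₁) x
  have hfac : (range d₁).subtype ∘ₗ d₁.rangeRestrict = d₁ := rfl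
  rw [← lTensor_comp_apply, hfac] at hx
  obtain ⟨z, rfl⟩ := (h y).1 hx
  have hd' : d₁.rangeRestrict ∘ₗ d₂ = 0 := LinearMap.ext fun q ↦ Subtype.ext (congr($hd q))
  rw [← lTensor_comp_apply, hd', lTensor_zero, LinearMap.zero_apply]

theorem torOneVanishes_of_exact_lTensor {Q₂ Q₁ Q₀ : Type*} [AddCommGroup Q₂] [AddCommGroup Q₁]
    [AddCommGroup Q₀] [Module R Q₂] [Module R Q₁] [Module R Q₀] [Module.Flat R Q₀]
    {d₂ : Q₂ →ₗ[R] Q₁} {d₁ : Q₁ →ₗ[R] Q₀} {ε : Q₀ →ₗ[R] N} (hd : d₁ ∘ₗ d₂ = 0) (hε : Exact d₁ ε)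
    (hε' : Surjective ε) (h : Exact (lTensor M d₂) (lTensor M d₁)) : TorOneVanishes R N M := by
  rw [torOneVanishes_iff_rTensor_injective (Submodule.injective_subtype _)
    (exact_range_subtype hε) hε', ← lTensor_inj_iff_rTensor_inj]
  exact lTensor_range_subtype_injective_of_exact hd h

end Presentations

section BaseChange

variable {R B : Type*} [CommRing R] [CommRing B] [Algebra R B]
variable {G M N K L X Y Z : Type*} [AddCommGroup G] [AddCommGroup M] [AddCommGroup N]
  [AddCommGroup K] [AddCommGroup L] [AddCommGroup X] [AddCommGroup Y] [AddCommGroup Z]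
  [Module R G] [Module B G] [IsScalarTower R B G] [Module R M] [Module R N] [Module B N]
  [IsScalarTower R B N] [Module R K] [Module B K] [IsScalarTower R B K] [Module R L] [Module B L]
  [IsScalarTower R B L] [Module R X] [Module R Y] [Module R Z]

theorem cancelBaseChange_lTensor_baseChange (u : X →ₗ[R] Y) (t : G ⊗[B] (B ⊗[R] X)) :
    AlgebraTensorModule.cancelBaseChange R B B G Y (lTensor G (u.baseChange B) t) =
      lTensor G u (AlgebraTensorModule.cancelBaseChange R B B G X t) :=
  congr($(AlgebraTensorModule.lTensor_comp_cancelBaseChange R B B (M := G) u) t).symm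

theorem lTensor_baseChange_injective_iff {u : X →ₗ[R] Y} :
    Injective (lTensor G (u.baseChange B)) ↔ Injective (lTensor G u) := by
  rw [← EquivLike.comp_injective _ (AlgebraTensorModule.cancelBaseChange R B B G Y),
    ← EquivLike.injective_comp (AlgebraTensorModule.cancelBaseChange R B B G X)]
  exact iff_of_eq (congrArg Injective (funext (cancelBaseChange_lTensor_baseChange u)))

theorem exact_lTensor_baseChange_iff {u : X →ₗ[R] Y} {v : Y →ₗ[R] Z} :
    Exact (lTensor G (u.baseChange B)) (lTensor G (v.baseChange B)) ↔
      Exact (lTensor G u) (lTensor G v) := by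
  symm
  refine Exact.iff_of_ladder_addEquiv
    (f₁₂ := (lTensor G (u.baseChange B)).toAddMonoidHom)
    (f₂₃ := (lTensor G (v.baseChange B)).toAddMonoidHom)
    (g₁₂ := (lTensor G u).toAddMonoidHom) (g₂₃ := (lTensor G v).toAddMonoidHom)
    (AlgebraTensorModule.cancelBaseChange R B B G X).toAddEquiv
    (AlgebraTensorModule.cancelBaseChange R B B G Y).toAddEquiv
    (AlgebraTensorModule.cancelBaseChange R B B G Z).toAddEquiv ?_ ?_
  · exact AddMonoidHom.ext fun t ↦ (cancelBaseChange_lTensor_baseChange u t).symm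
  · exact AddMonoidHom.ext fun t ↦ (cancelBaseChange_lTensor_baseChange v t).symm

theorem lTensor_injective_of_flat_of_lTensor_injective [Module.Flat B G] {u : X →ₗ[R] Y}
    (hu : Injective (lTensor B u)) : Injective (lTensor G u) :=
  lTensor_baseChange_injective_iff.1
    (Module.Flat.lTensor_preserves_injective_linearMap (u.baseChange B) hu)

theorem rTensor_restrictScalars_injective_of_flat [Module.Flat B (B ⊗[R] M)] {u : K →ₗ[B] L}
    (hu : Injective u) : Injective (rTensor M (u.restrictScalars R)) := by
  have hcomm : AlgebraTensorModule.rTensor R M u ∘ₗ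
      AlgebraTensorModule.cancelBaseChange R B B K M =
      (AlgebraTensorModule.cancelBaseChange R B B L M).toLinearMap ∘ₗ rTensor (B ⊗[R] M) u := by
    ext; simp
  have hinj : Injective (AlgebraTensorModule.rTensor R M u ∘ₗ
      (AlgebraTensorModule.cancelBaseChange R B B K M).toLinearMap) := by
    rw [hcomm]
    exact (AlgebraTensorModule.cancelBaseChange R B B L M).injective.comp
      (Module.Flat.rTensor_preserves_injective_linearMap u hu)
  exact (EquivLike.injective_comp (AlgebraTensorModule.cancelBaseChange R B B K M) _).1 hinj

variable (B) in
theorem TorOneVanishes.of_flat_baseChange [Module.Flat B (B ⊗[R] M)] (h : TorOneVanishes R B M) :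
    TorOneVanishes R N M := by
  let p : (N →₀ B) →ₗ[B] N := Finsupp.linearCombination B id
  have hfree : TorOneVanishes R (N →₀ B) M :=
    lTensor_injective_of_flat_of_lTensor_injective (B := B) (X := syzygy R M) (Y := M →₀ R) h
  have hexact : Exact ((ker p).subtype.restrictScalars R) (p.restrictScalars R) :=
    exact_subtype_ker_map p
  exact hfree.of_rTensor_injective hexact (Finsupp.linearCombination_id_surjective B N)
    (rTensor_restrictScalars_injective_of_flat (K := ker p) (L := N →₀ B) (ker p).injective_subtype)

theorem TorOneVanishes.flat_baseChange_syzygy [Module.Flat B (B ⊗[R] M)]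
    (h : TorOneVanishes R B M) : Module.Flat B (B ⊗[R] syzygy R M) :=
  flat_of_exact_of_flat (i := (syzygy R M).subtype.baseChange B)
    (p := (Finsupp.linearCombination R (id : M → M)).baseChange B) h
    (lTensor_exact (M := syzygy R M) (N := M →₀ R) B (exact_syzygy R M)
      (Finsupp.linearCombination_id_surjective R M))
    (lTensor_surjective B (Finsupp.linearCombination_id_surjective R M))

end BaseChange

section Torsion

variable {R : Type*} [CommRing R] {M N : Type*} [AddCommGroup M] [Module R M] [AddCommGroup N]
  [Module R N] {g : R}

theorem exists_isTorsionBy_pow_of_finite [Module.Finite R N]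
    (h : Module.IsTorsion' N (Submonoid.powers g)) : ∃ n : ℕ, Module.IsTorsionBy R N (g ^ n) := by
  obtain ⟨s, hs⟩ := Module.Finite.fg_top (R := R) (M := N)
  choose n hn using (Submodule.isTorsion'_powers_iff g).1 h
  refine ⟨s.sup n, (Module.isTorsionBy_iff_torsionBy_eq_top _).2 (top_le_iff.1 ?_)⟩
  rw [← hs, Submodule.span_le]
  intro x hx
  exact Submodule.torsionBy_le_torsionBy_of_dvd _ _ (pow_dvd_pow g (Finset.le_sup hx)) (hn x)

namespace TorOneVanishes

variable [Module.Flat (R ⧸ Ideal.span {g}) ((R ⧸ Ideal.span {g}) ⊗[R] M)]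

theorem of_isTorsionBy (h : TorOneVanishes R (R ⧸ Ideal.span {g}) M)
    (hN : Module.IsTorsionBy R N g) : TorOneVanishes R N M := by
  have hspan : Module.IsTorsionBySet R N (Ideal.span {g} : Ideal R) :=
    (Module.isTorsionBySet_span_singleton_iff g).2 hN
  let _ := hspan.module
  have := hspan.isScalarTower (S := R)
  exact h.of_flat_baseChange (R ⧸ Ideal.span {g})

theorem of_isTorsionBy_pow (h : TorOneVanishes R (R ⧸ Ideal.span {g}) M) (n : ℕ)
    (hN : Module.IsTorsionBy R N (g ^ n)) : TorOneVanishes R N M := by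
  induction n generalizing N with
  | zero =>
    refine h.of_isTorsionBy fun x ↦ ?_
    rw [← one_smul R x, ← pow_zero g, hN, smul_zero]
  | succ n ih =>
    let T := Submodule.torsionBy R N g
    refine of_exact T.injective_subtype (exact_subtype_mkQ T) T.mkQ_surjective
      (h.of_isTorsionBy (Submodule.torsionBy_isTorsionBy g)) (ih ?_)
    intro x
    obtain ⟨x, rfl⟩ := T.mkQ_surjective x
    rw [← map_smul, Submodule.mkQ_apply, Submodule.Quotient.mk_eq_zero, Submodule.mem_torsionBy_iff,
      ← mul_smul, ← pow_succ', hN]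

theorem of_isTorsion'_powers (h : TorOneVanishes R (R ⧸ Ideal.span {g}) M)
    (hN : Module.IsTorsion' N (Submonoid.powers g)) : TorOneVanishes R N M := by
  refine of_forall_finite_submodule fun N' _ ↦ ?_
  obtain ⟨n, hn⟩ := exists_isTorsionBy_pow_of_finite (N := N') (g := g)
    fun x ↦ (@hN x).imp fun _ hs ↦ Subtype.ext hs
  exact h.of_isTorsionBy_pow n hn

end TorOneVanishes

end Torsion

section Gluing

variable {C : Type*} [CommRing C] {M N : Type*} [AddCommGroup M] [Module C M] [AddCommGroup N]
  [Module C N]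

theorem isTorsion'_ker_mkLinearMap (S : Submonoid C) :
    Module.IsTorsion' (ker (LocalizedModule.mkLinearMap S N)) S := by
  rintro ⟨x, hx⟩
  obtain ⟨s, hs⟩ := (IsLocalizedModule.eq_zero_iff S _).1 hx
  exact ⟨s, Subtype.ext hs⟩

theorem isTorsion'_quotient_range_mkLinearMap (S : Submonoid C) :
    Module.IsTorsion' (LocalizedModule S N ⧸ range (LocalizedModule.mkLinearMap S N)) S := by
  intro x
  obtain ⟨x, rfl⟩ := Submodule.mkQ_surjective _ x
  obtain ⟨⟨y, s⟩, hs⟩ := IsLocalizedModule.surj S (LocalizedModule.mkLinearMap S N) x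
  refine ⟨s, ?_⟩
  rw [Submonoid.smul_def, ← map_smul, Submodule.mkQ_apply, Submodule.Quotient.mk_eq_zero]
  exact ⟨y, hs.symm⟩

theorem flat_of_flat_localization_of_flat_quotient (g : C)
    [Module.Flat (Localization (Submonoid.powers g)) (Localization (Submonoid.powers g) ⊗[C] M)]
    [Module.Flat (C ⧸ Ideal.span {g}) ((C ⧸ Ideal.span {g}) ⊗[C] M)]
    (h₁ : TorOneVanishes C (C ⧸ Ideal.span {g}) M)
    (h₂ : TorOneVanishes C (C ⧸ Ideal.span {g}) (syzygy C M)) : Module.Flat C M := by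
  have : Module.Flat C (Localization (Submonoid.powers g)) :=
    IsLocalization.flat _ (Submonoid.powers g)
  have := h₁.flat_baseChange_syzygy
  refine flat_of_forall_torOneVanishes_quotient fun I ↦ ?_
  exact TorOneVanishes.of_ker_of_range_quotient
    (LocalizedModule.mkLinearMap (Submonoid.powers g) (C ⧸ I))
    (h₁.of_isTorsion'_powers (isTorsion'_ker_mkLinearMap _))
    (TorOneVanishes.of_flat_left.of_flat_baseChange (Localization (Submonoid.powers g)))
    (h₂.of_isTorsion'_powers (isTorsion'_quotient_range_mkLinearMap _))

end Gluing

section ProjectiveResolution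

universe u

variable {A : Type u} [CommRing A] {N : ModuleCat.{u} A} (P : ProjectiveResolution N)

theorem exact_lTensor_resolution_of_isZero_tor {X : ModuleCat.{u} A} {n : ℕ}
    (h : Limits.IsZero (((Tor (ModuleCat A) (n + 1)).obj X).obj N)) :
    Exact (lTensor X (P.complex.d (n + 2) (n + 1)).hom)
      (lTensor X (P.complex.d (n + 1) n).hom) := by
  have hhomology := h.of_iso
    (P.isoLeftDerivedObj ((MonoidalCategory.tensoringLeft (ModuleCat A)).obj X) (n + 1)).symm
  have hexact := (HomologicalComplex.exactAt_iff_isZero_homology _ _).2 hhomology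
  rw [HomologicalComplex.exactAt_iff' _ (n + 2) (n + 1) n (by simp) (by simp),
    ShortComplex.ShortExact.moduleCat_exact_iff_function_exact] at hexact
  exact hexact

theorem exact_resolution_augmentation : Exact (P.complex.d 1 0).hom (P.π.f 0).hom :=
  (ShortComplex.ShortExact.moduleCat_exact_iff_function_exact _).1 P.exact₀

theorem resolution_augmentation_surjective : Surjective (P.π.f 0).hom :=
  (ModuleCat.epi_iff_surjective _).1 inferInstance

theorem flat_resolution (n : ℕ) : Module.Flat A (P.complex.X n) :=
  have := (IsProjective.iff_projective (R := A) (P.complex.X n)).2 (P.projective n)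
  inferInstance

theorem resolution_d_comp_d (n : ℕ) :
    (P.complex.d (n + 1) n).hom ∘ₗ (P.complex.d (n + 2) (n + 1)).hom = 0 :=
  congr(ModuleCat.Hom.hom $(P.complex.d_comp_d (n + 2) (n + 1) n))

end ProjectiveResolution

section ChangeOfRings

universe u

variable {A C M N : Type u} [CommRing A] [CommRing C] [Algebra A C] [AddCommGroup M]
  [Module C M] [Module A M] [IsScalarTower A C M] [AddCommGroup N] [Module A N]

theorem torOneVanishes_baseChange_of_isZero_tor
    (hM : Limits.IsZero (((Tor (ModuleCat A) 1).obj (.of A M)).obj (.of A N))) :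
    TorOneVanishes C (C ⊗[A] N) M := by
  let P := projectiveResolution (ModuleCat.of A N)
  have := flat_resolution P 0
  exact torOneVanishes_of_exact_lTensor (ε := (P.π.f 0).hom.baseChange C)
    (by rw [← baseChange_comp, resolution_d_comp_d, baseChange_zero])
    (lTensor_exact C (exact_resolution_augmentation P) (resolution_augmentation_surjective P))
    (lTensor_surjective C (resolution_augmentation_surjective P))
    (exact_lTensor_baseChange_iff.2
      (exact_lTensor_resolution_of_isZero_tor P (X := .of A M) (n := 0) hM))

theorem torOneVanishes_baseChange_syzygy_of_isZero_tor
    (hC : Limits.IsZero (((Tor (ModuleCat A) 1).obj (.of A C)).obj (.of A N)))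
    (hM : Limits.IsZero (((Tor (ModuleCat A) 2).obj (.of A M)).obj (.of A N))) :
    TorOneVanishes C (C ⊗[A] N) (syzygy C M) := by
  let P := projectiveResolution (ModuleCat.of A N)
  let d (n : ℕ) : C ⊗[A] P.complex.X (n + 1) →ₗ[C] C ⊗[A] P.complex.X n :=
    (P.complex.d (n + 1) n).hom.baseChange C
  have := flat_resolution P 0
  have := flat_resolution P 1
  have hd : Exact (d 1) (d 0) :=
    exact_lTensor_resolution_of_isZero_tor P (X := .of A C) (n := 0) hC
  have hrange : TorOneVanishes C (range (d 0)) M :=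
    torOneVanishes_of_exact_lTensor (d₂ := d 2) (d₁ := d 1) (ε := (d 0).rangeRestrict)
      (by rw [← baseChange_comp, resolution_d_comp_d, baseChange_zero])
      (LinearMap.exact_iff.2 (by rw [ker_rangeRestrict, hd.linearMap_ker_eq]))
      (surjective_rangeRestrict _)
      (exact_lTensor_baseChange_iff.2
        (exact_lTensor_resolution_of_isZero_tor P (X := .of A M) (n := 1) hM))
  have hε : Exact (d 0) ((P.π.f 0).hom.baseChange C) :=
    lTensor_exact C (exact_resolution_augmentation P) (resolution_augmentation_surjective P)
  exact hrange.syzygy_right (range (d 0)).injective_subtype (exact_range_subtype hε)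
    (lTensor_surjective C (resolution_augmentation_surjective P))

theorem stmt_0_general (f : A)
    (ha : Module.Flat (Localization (Submonoid.powers (algebraMap A C f)))
      (LocalizedModule (Submonoid.powers (algebraMap A C f)) M))
    (hb : Module.Flat (C ⧸ Ideal.span {algebraMap A C f})
      (M ⧸ (Ideal.span {algebraMap A C f} • ⊤ : Submodule C M)))
    (hc : Limits.IsZero (((Tor (ModuleCat A) 1).obj (.of A C)).obj (.of A (A ⧸ Ideal.span {f}))))
    (hd₁ : Limits.IsZero (((Tor (ModuleCat A) 1).obj (.of A M)).obj (.of A (A ⧸ Ideal.span {f}))))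
    (hd₂ : Limits.IsZero (((Tor (ModuleCat A) 2).obj (.of A M)).obj (.of A (A ⧸ Ideal.span {f})))) :
    Module.Flat C M := by
  have : Module.Flat (Localization (Submonoid.powers (algebraMap A C f)))
      (Localization (Submonoid.powers (algebraMap A C f)) ⊗[C] M) :=
    .of_linearEquiv (LocalizedModule.equivTensorProduct _ M).symm
  have : Module.Flat (C ⧸ Ideal.span {algebraMap A C f})
      ((C ⧸ Ideal.span {algebraMap A C f}) ⊗[C] M) :=
    .of_linearEquiv ((quotTensorEquivQuotSMul M _).extendScalarsOfSurjective
      Ideal.Quotient.mk_surjective)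
  let e : (C ⊗[A] (A ⧸ Ideal.span {f})) ≃ₗ[C] C ⧸ Ideal.span {algebraMap A C f} :=
    (Algebra.TensorProduct.quotIdealMapEquivTensorQuot C (Ideal.span {f})).symm.toLinearEquiv ≪≫ₗ
      Submodule.quotEquivOfEq _ _ (by rw [Ideal.map_span, Set.image_singleton])
  exact flat_of_flat_localization_of_flat_quotient (algebraMap A C f)
    ((torOneVanishes_baseChange_of_isZero_tor hd₁).congr_left e)
    ((torOneVanishes_baseChange_syzygy_of_isZero_tor hc hd₂).congr_left e)

end ChangeOfRings

end

/-- Let A → C be a homomorphism of commutative rings, f ∈ A, and M a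
C-module (also an A-module via A → C). If (a) M[f⁻¹] is flat over C[f⁻¹], (b) M/fM is flat
over C/fC, (c) Tor₁^A(C, A/fA) = 0, and (d) Tor_i^A(M, A/fA) = 0 for i = 1, 2, then M is a
flat C-module. -/
theorem stmt_0 (A C : Type) [CommRing A] [CommRing C] [Algebra A C]
    (f : A) (M : Type) [AddCommGroup M] [Module C M] [Module A M] [IsScalarTower A C M]
    -- (a) M[f⁻¹] is a flat C[f⁻¹]-module
    (ha : Module.Flat (Localization (Submonoid.powers (algebraMap A C f)))
        (LocalizedModule (Submonoid.powers (algebraMap A C f)) M))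
    -- (b) M/fM is a flat C/fC-module
    (hb : Module.Flat (C ⧸ Ideal.span {algebraMap A C f})
        (M ⧸ (Ideal.span {algebraMap A C f} • ⊤ : Submodule C M)))
    -- (c) Tor₁^A(C, A/fA) = 0
    (hc : Limits.IsZero ((((Tor (ModuleCat A) 1).obj (ModuleCat.of A C)).obj
        (ModuleCat.of A (A ⧸ Ideal.span {f})))))
    -- (d) Tor_i^A(M, A/fA) = 0 for i = 1, 2
    (hd1 : Limits.IsZero ((((Tor (ModuleCat A) 1).obj (ModuleCat.of A M)).obj
        (ModuleCat.of A (A ⧸ Ideal.span {f})))))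
    (hd2 : Limits.IsZero ((((Tor (ModuleCat A) 2).obj (ModuleCat.of A M)).obj
        (ModuleCat.of A (A ⧸ Ideal.span {f}))))) :
    Module.Flat C M := by
  exact stmt_0_general f ha hb hc hd1 hd2
end

section
/- Let A be a commutative ring, f ∈ A, M an A-module, and let A^ := lim_n A/fⁿA be the f-adic completion of A. Then: (i) for every a ∈ A annihilating the localization M_f = M[f⁻¹] and every b ∈ A annihilating M ⊗_A A^, the product ab annihilates M (i.e. Ann_A(M[f⁻¹]) · Ann_A(M ⊗_A A^) ⊆ Ann_A(M)); (ii) if M is finitely generated, fM = M, and every element of M is annihilated by some power of f (i.e. M[f⁻¹] = 0), then M = 0. -/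
/-!
Write `Â` for the `I`-adic completion of `A`. If every element of `N` is killed by a power of `I`,
then `N → N ⊗ Â` is injective: a relation `x ⊗ 1 = 0` already holds in `P ⊗ Â` for some finitely
generated `P ≤ N`, a single power `I ^ n` kills `P`, and the map `P ⊗ Â → P / I ^ n P = P` sends
`x ⊗ 1` to `x`. Hence `Ann (N ⊗ Â) ≤ Ann N`. When `I` is generated by finitely many `g` and `a`
annihilates each `M[g⁻¹]`, this applies to `N = a M`, and `M ⊗ Â` surjects onto `N ⊗ Â`.

For the second part, Nakayama's lemma gives `r ∈ 1 + I` with `r M = 0`; the annihilator of an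
element `m` contains `r` and has `I` in its radical, so it is the unit ideal.
-/

section PowerTorsion

open TensorProduct Ideal

variable {A M : Type*} [CommRing A] [AddCommGroup M] [Module A M] {I : Ideal A}

theorem mem_pow_smul_top_of_tmul_one_adicCompletion_eq_zero {x : M}
    (hx : x ⊗ₜ[A] (1 : AdicCompletion I A) = 0) (n : ℕ) : x ∈ (I ^ n • ⊤ : Submodule A M) := by
  have of_eq_zero : AdicCompletion.of I M x = 0 := by
    simpa using congrArg (AdicCompletion.ofTensorProduct I M ∘ TensorProduct.comm A M _) hx
  simpa using congrArg (AdicCompletion.eval I M n) of_eq_zero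

theorem exists_pow_le_annihilator_of_fg (hM : ∀ m : M, ∃ n, I ^ n ≤ torsionOf A M m)
    {P : Submodule A M} (hP : P.FG) : ∃ n, I ^ n ≤ P.annihilator := by
  induction P, hP using Submodule.fg_induction with
  | singleton x => simpa only [annihilator_span_singleton_eq_torsionOf] using hM x
  | sup P Q _ _ ihP ihQ =>
    obtain ⟨p, hp⟩ := ihP
    obtain ⟨q, hq⟩ := ihQ
    rw [Submodule.annihilator_sup]
    exact ⟨max p q, le_inf ((pow_le_pow_right (le_max_left p q)).trans hp)
      ((pow_le_pow_right (le_max_right p q)).trans hq)⟩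

theorem eq_zero_of_tmul_one_adicCompletion_eq_zero
    (hM : ∀ m : M, ∃ n, I ^ n ≤ torsionOf A M m) {x : M}
    (hx : x ⊗ₜ[A] (1 : AdicCompletion I A) = 0) : x = 0 := by
  let x₀ : A ∙ x := ⟨x, Submodule.mem_span_singleton_self x⟩
  obtain ⟨P, hxP, hP, hx₀⟩ := TensorProduct.eq_zero_of_fg_of_subtype_eq_zero
    (Submodule.fg_span_singleton x) (t := x₀ ⊗ₜ[A] (1 : AdicCompletion I A))
    (by simpa [x₀] using hx)
  obtain ⟨n, hn⟩ := exists_pow_le_annihilator_of_fg hM hP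
  have pow_smul_top : (I ^ n • ⊤ : Submodule A P) = ⊥ :=
    Submodule.le_annihilator_iff.mp (hn.trans_eq Submodule.annihilator_top.symm)
  have mem_bot := mem_pow_smul_top_of_tmul_one_adicCompletion_eq_zero hx₀ n
  rw [pow_smul_top, Submodule.mem_bot] at mem_bot
  exact congrArg Subtype.val mem_bot

theorem annihilator_tensorProduct_adicCompletion_le
    (hM : ∀ m : M, ∃ n, I ^ n ≤ torsionOf A M m) :
    Module.annihilator A (M ⊗[A] AdicCompletion I A) ≤ Module.annihilator A M := by
  refine fun b hb ↦ Module.mem_annihilator.mpr fun m ↦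
    eq_zero_of_tmul_one_adicCompletion_eq_zero hM ?_
  rw [← smul_tmul']
  exact Module.mem_annihilator.mp hb _

theorem mul_mem_annihilator_of_pow_le_torsionOf_smul {a b : A}
    (ha : ∀ m : M, ∃ n, I ^ n ≤ torsionOf A M (a • m))
    (hb : b ∈ Module.annihilator A (M ⊗[A] AdicCompletion I A)) :
    a * b ∈ Module.annihilator A M := by
  let aM := LinearMap.range (LinearMap.lsmul A M a)
  have aM_torsion : ∀ y : aM, ∃ n, I ^ n ≤ torsionOf A aM y := by
    rintro ⟨_, m, rfl⟩
    obtain ⟨n, hn⟩ := ha m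
    exact ⟨n, fun i hi ↦ Subtype.ext (hn hi)⟩
  have tensor_surjective := LinearMap.rTensor_surjective (AdicCompletion I A)
    (LinearMap.lsmul A M a).surjective_rangeRestrict
  have b_mem : b ∈ Module.annihilator A aM := annihilator_tensorProduct_adicCompletion_le aM_torsion
    (LinearMap.annihilator_le_of_surjective _ tensor_surjective hb)
  refine Module.mem_annihilator.mpr fun m ↦ ?_
  rw [mul_comm, mul_smul]
  exact congrArg Subtype.val (Module.mem_annihilator.mp b_mem ⟨a • m, m, rfl⟩)

theorem subsingleton_of_smul_top_eq_top_of_le_radical_torsionOf [Module.Finite A M]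
    (hIM : (I • ⊤ : Submodule A M) = ⊤) (hM : ∀ m : M, I ≤ (torsionOf A M m).radical) :
    Subsingleton M := by
  obtain ⟨r, hrI, hrM⟩ := Submodule.exists_sub_one_mem_and_smul_eq_zero_of_fg_of_le_smul I
    (⊤ : Submodule A M) Module.Finite.fg_top hIM.ge
  refine subsingleton_of_forall_eq 0 fun m ↦ ?_
  have r_mem : r ∈ (torsionOf A M m).radical := le_radical (hrM m trivial)
  have one_mem : (1 : A) ∈ (torsionOf A M m).radical := by
    simpa using sub_mem r_mem (hM m hrI)
  have one_mem_torsionOf : (1 : A) ∈ torsionOf A M m := by simpa [mem_radical_iff] using one_mem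
  simpa using one_mem_torsionOf

theorem mem_radical_torsionOf_smul_of_mem_annihilator_localizedModule {a g : A}
    (ha : a ∈ Module.annihilator A (LocalizedModule (Submonoid.powers g) M)) (m : M) :
    g ∈ (torsionOf A M (a • m)).radical := by
  have mk_eq_zero : LocalizedModule.mkLinearMap (Submonoid.powers g) M (a • m) = 0 := by
    rw [map_smul, Module.mem_annihilator.mp ha]
  obtain ⟨⟨_, n, rfl⟩, hn⟩ := (IsLocalizedModule.eq_zero_iff (Submonoid.powers g) _).mp mk_eq_zero
  exact ⟨n, hn⟩

theorem stmt_1_general (S : Set A) :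
    (S.Finite →
      (⨅ g ∈ S, Module.annihilator A (LocalizedModule (Submonoid.powers g) M)) *
          Module.annihilator A (M ⊗[A] AdicCompletion (span S) A) ≤
        Module.annihilator A M)
    ∧ (Module.Finite A M → (span S • ⊤ : Submodule A M) = ⊤ →
        (∀ g ∈ S, ∀ m : M, ∃ n : ℕ, g ^ n • m = 0) → Subsingleton M) := by
  refine ⟨fun hS ↦ mul_le.mpr fun a ha b hb ↦ ?_, fun _ hSM htors ↦ ?_⟩
  · simp only [Submodule.mem_iInf] at ha
    refine mul_mem_annihilator_of_pow_le_torsionOf_smul (fun m ↦ ?_) hb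
    have span_le_radical : span S ≤ (torsionOf A M (a • m)).radical := span_le.mpr fun g hg ↦
      mem_radical_torsionOf_smul_of_mem_annihilator_localizedModule (ha g hg) m
    exact exists_pow_le_of_le_radical_of_fg span_le_radical (Submodule.fg_span hS)
  · exact subsingleton_of_smul_top_eq_top_of_le_radical_torsionOf hSM
      fun m ↦ span_le.mpr fun g hg ↦ htors g hg m

end PowerTorsion

/-- Let A be a commutative ring, f ∈ A, M an A-module, and
A^ := lim_n A/fⁿA the f-adic completion of A. Then:
(i) Ann_A(M[f⁻¹]) · Ann_A(M ⊗_A A^) ⊆ Ann_A(M);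
(ii) if M is finitely generated, fM = M, and M[f⁻¹] = 0 (every element of M is killed by a
power of f), then M = 0. -/
theorem stmt_1 (A : Type) [CommRing A] (f : A) (M : Type) [AddCommGroup M] [Module A M] :
    (Module.annihilator A (LocalizedModule (Submonoid.powers f) M) *
        Module.annihilator A (TensorProduct A M (AdicCompletion (Ideal.span {f}) A)) ≤
      Module.annihilator A M)
    ∧ (Module.Finite A M → (Ideal.span {f} • ⊤ : Submodule A M) = ⊤ →
        (∀ m : M, ∃ n : ℕ, f ^ n • m = 0) → Subsingleton M) := by
  simpa using stmt_1_general (M := M) {f}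
end

section
/- Let A be a commutative ring, I ⊆ A an ideal contained in the Jacobson radical of A, and P a finitely generated A-module such that P/IP is a projective A/I-module. Then the following conditions are equivalent: (i) P is a projective A-module; (ii) P is a flat A-module; (iii) P is finitely presented and the natural map I ⊗_A P → P is injective (equivalently, Tor₁^A(P, A/I) = 0); (iv) the natural reduction map Hom_A(P, A) → Hom_{A/I}(P/IP, A/I), sending an A-linear functional φ to the induced functional on P/IP, is surjective. -/
/-!
By Nakayama and Vasconcelos, an endomorphism of a finite module that is surjective modulo `I` is
bijective, which turns splittings modulo `I` that lift to linear maps into actual splittings.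
Write `P` as a quotient `F ⧸ K` of a finite free module. Projectivity of `P ⧸ IP` splits
`F ⧸ IF → P ⧸ IP`.

* If functionals lift, the splitting lifts coordinatewise to a map `P → F`, so `P` is a direct
  summand of `F`.
* If `K` is finite and `I ⊗ P → P` is injective, then `K ⧸ IK → F ⧸ IF` is a split injection by the
  snake lemma, its retraction lifts, and `K` is a direct summand of `F`.
* If `P` is flat, choose a finite `N ≤ K` with `K ≤ N + IF` and let `y ∈ Q := F ⧸ N` die in `P`. The
  map `Q ⧸ (y) → P` from a finitely presented module factors through a finite free module, which
  maps back to `Q`. The resulting endomorphism of `Q` kills `y` and is the identity modulo `I`, so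
  `y = 0`. Thus `K = N` is finite.
-/

open Function TensorProduct

variable {A : Type*} [CommRing A] {I : Ideal A}
  {F K M N P : Type*} [AddCommGroup F] [Module A F] [AddCommGroup K] [Module A K]
  [AddCommGroup M] [Module A M] [AddCommGroup N] [Module A N] [AddCommGroup P] [Module A P]

section Reduction

theorem reduceModIdeal_eq_iff {f : M →ₗ[A] N}
    {g : (M ⧸ (I • ⊤ : Submodule A M)) →ₗ[A ⧸ I] N ⧸ (I • ⊤ : Submodule A N)} :
    f.reduceModIdeal I = g ↔
      ∀ x, Submodule.Quotient.mk (f x) = g (Submodule.Quotient.mk x) := by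
  rw [LinearMap.ext_iff, (Submodule.Quotient.mk_surjective _).forall]
  rfl

theorem reduceModIdeal_comp (g : N →ₗ[A] P) (f : M →ₗ[A] N) :
    (g ∘ₗ f).reduceModIdeal I = g.reduceModIdeal I ∘ₗ f.reduceModIdeal I :=
  reduceModIdeal_eq_iff.mpr fun _ ↦ rfl

theorem reduceModIdeal_surjective {f : M →ₗ[A] N} (hf : Surjective f) :
    Surjective (f.reduceModIdeal I) := by
  refine (Submodule.Quotient.mk_surjective _).forall.mpr fun y ↦ ?_
  obtain ⟨x, rfl⟩ := hf y
  exact ⟨Submodule.Quotient.mk x, rfl⟩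

theorem reduceModIdeal_exact {i : K →ₗ[A] F} {π : F →ₗ[A] P} (hiπ : Exact i π)
    (hπ : Surjective π) : Exact (i.reduceModIdeal I) (π.reduceModIdeal I) := by
  refine (hiπ.exact_mapQ_iff (Submodule.smul_top_le_comap_smul_top I i)
    (Submodule.smul_top_le_comap_smul_top I π)).mpr ?_
  rw [Submodule.map_smul'', Submodule.map_top, LinearMap.range_eq_top.mpr hπ]
  exact inf_le_right

theorem exists_reduceModIdeal_eq_of_projective [Module.Projective A F]
    (f : (F ⧸ (I • ⊤ : Submodule A F)) →ₗ[A ⧸ I] M ⧸ (I • ⊤ : Submodule A M)) :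
    ∃ φ : F →ₗ[A] M, φ.reduceModIdeal I = f := by
  obtain ⟨φ, hφ⟩ := Module.projective_lifting_property (I • ⊤ : Submodule A M).mkQ
    (f.restrictScalars A ∘ₗ (I • ⊤ : Submodule A F).mkQ) (Submodule.mkQ_surjective _)
  exact ⟨φ, reduceModIdeal_eq_iff.mpr (LinearMap.congr_fun hφ)⟩

end Reduction

section Nakayama

theorem bijective_of_surjective_reduceModIdeal [Module.Finite A M] (hI : I ≤ Ideal.jacobson ⊥)
    {g : M →ₗ[A] M} (hg : Surjective (g.reduceModIdeal I)) : Bijective g :=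
  OrzechProperty.bijective_of_surjective_endomorphism g <|
    g.surjective_of_surjective_comp_mkQ I hI <| hg.comp (Submodule.Quotient.mk_surjective _)

theorem exists_retraction_of_surjective_reduceModIdeal_comp [Module.Finite A M]
    (hI : I ≤ Ideal.jacobson ⊥) {f : M →ₗ[A] N} {g : N →ₗ[A] M}
    (hgf : Surjective ((g ∘ₗ f).reduceModIdeal I)) : ∃ r : N →ₗ[A] M, r ∘ₗ f = .id :=
  let e := LinearEquiv.ofBijective (g ∘ₗ f) (bijective_of_surjective_reduceModIdeal hI hgf)
  ⟨e.symm ∘ₗ g, LinearMap.ext e.symm_apply_apply⟩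

theorem exists_section_of_surjective_reduceModIdeal_comp [Module.Finite A M]
    (hI : I ≤ Ideal.jacobson ⊥) {f : M →ₗ[A] N} {g : N →ₗ[A] M}
    (hgf : Surjective ((g ∘ₗ f).reduceModIdeal I)) : ∃ s : M →ₗ[A] N, g ∘ₗ s = .id :=
  let e := LinearEquiv.ofBijective (g ∘ₗ f) (bijective_of_surjective_reduceModIdeal hI hgf)
  ⟨f ∘ₗ e.symm, LinearMap.ext e.apply_symm_apply⟩

theorem exists_retraction_of_exists_retraction_reduceModIdeal [Module.Finite A K]
    [Module.Projective A F] (hI : I ≤ Ideal.jacobson ⊥) (i : K →ₗ[A] F)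
    (h : ∃ r, r ∘ₗ i.reduceModIdeal I = .id) : ∃ r, r ∘ₗ i = .id := by
  obtain ⟨r, hr⟩ := h
  obtain ⟨φ, rfl⟩ := exists_reduceModIdeal_eq_of_projective r
  rw [← reduceModIdeal_comp] at hr
  exact exists_retraction_of_surjective_reduceModIdeal_comp hI (g := φ)
    (by simpa only [hr] using! surjective_id)

end Nakayama

section Dual

/-- The functional `P ⧸ IP → A ⧸ I` induced by a functional `φ` on `P`. It is only recorded as an
`A`-linear map, which is the same as being `A ⧸ I`-linear. -/
def reduceDual (I : Ideal A) (φ : P →ₗ[A] A) : (P ⧸ (I • ⊤ : Submodule A P)) →ₗ[A] A ⧸ I :=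
  Submodule.mapQ (I • ⊤ : Submodule A P) (I : Submodule A A) φ <|
    Submodule.smul_le.mpr fun _ hr x _ ↦ by
      simpa using I.mul_mem_right (φ x) hr

theorem reduceDual_surjective_of_projective [Module.Projective A P] :
    Surjective (reduceDual I : (P →ₗ[A] A) → _) := by
  intro f
  obtain ⟨φ, hφ⟩ := Module.projective_lifting_property (I : Submodule A A).mkQ
    (f ∘ₗ (I • ⊤ : Submodule A P).mkQ) (Submodule.mkQ_surjective _)
  exact ⟨φ, Submodule.linearMap_qext _ hφ⟩

theorem mem_smul_top_of_forall_apply_mem {ι : Type*} [Finite ι] {x : ι → A}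
    (hx : ∀ i, x i ∈ I) : x ∈ (I • ⊤ : Submodule A (ι → A)) := by
  classical
  have := Fintype.ofFinite ι
  rw [pi_eq_sum_univ' x]
  exact Submodule.sum_mem _ fun i _ ↦ Submodule.smul_mem_smul (hx i) trivial

theorem exists_reduceModIdeal_eq_of_reduceDual_surjective {ι : Type*} [Finite ι]
    (h : Surjective (reduceDual I : (P →ₗ[A] A) → _))
    (f : (P ⧸ (I • ⊤ : Submodule A P)) →ₗ[A ⧸ I] (ι → A) ⧸ (I • ⊤ : Submodule A (ι → A))) :
    ∃ φ : P →ₗ[A] (ι → A), φ.reduceModIdeal I = f := by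
  choose φ hφ using fun i ↦ h (reduceDual I (LinearMap.proj i) ∘ₗ f.restrictScalars A)
  refine ⟨LinearMap.pi φ, reduceModIdeal_eq_iff.mpr fun p ↦ ?_⟩
  obtain ⟨x, hx⟩ := Submodule.Quotient.mk_surjective _ (f (Submodule.Quotient.mk p))
  rw [← hx, Submodule.Quotient.eq]
  refine mem_smul_top_of_forall_apply_mem fun i ↦ ?_
  have hφx : Ideal.Quotient.mk I (φ i p) = Ideal.Quotient.mk I (x i) :=
    (LinearMap.congr_fun (hφ i) (Submodule.Quotient.mk p)).trans
      (congrArg (reduceDual I (LinearMap.proj i)) hx.symm)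
  exact Ideal.Quotient.eq.mp hφx

theorem projective_of_reduceDual_surjective [Module.Finite A P]
    [Module.Projective (A ⧸ I) (P ⧸ (I • ⊤ : Submodule A P))] (hI : I ≤ Ideal.jacobson ⊥)
    (h : Surjective (reduceDual I : (P →ₗ[A] A) → _)) : Module.Projective A P := by
  obtain ⟨n, π, hπ⟩ := Module.Finite.exists_fin' A P
  obtain ⟨s, hs⟩ := Module.projective_lifting_property (π.reduceModIdeal I) .id
    (reduceModIdeal_surjective hπ)
  obtain ⟨σ, rfl⟩ := exists_reduceModIdeal_eq_of_reduceDual_surjective h s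
  rw [← reduceModIdeal_comp] at hs
  obtain ⟨t, ht⟩ := exists_section_of_surjective_reduceModIdeal_comp hI (f := σ) (g := π)
    (by simpa only [hs] using! surjective_id)
  exact Module.Projective.of_split t π ht

end Dual

section IdealTensor

/-- The multiplication map `I ⊗ M → M`, whose kernel is `Tor₁(M, A ⧸ I)`. -/
def idealSMulMap (I : Ideal A) (M : Type*) [AddCommGroup M] [Module A M] : I ⊗[A] M →ₗ[A] M :=
  TensorProduct.lift ((LinearMap.lsmul A M).comp I.subtype)

theorem idealSMulMap_eq_lid_comp_rTensor :
    idealSMulMap I M = (TensorProduct.lid A M).toLinearMap ∘ₗ I.subtype.rTensor M := by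
  ext
  simp [idealSMulMap]

theorem idealSMulMap_injective_of_flat [Module.Flat A M] : Injective (idealSMulMap I M) := by
  rw [idealSMulMap_eq_lid_comp_rTensor]
  exact (TensorProduct.lid A M).injective.comp
    (Module.Flat.rTensor_preserves_injective_linearMap _ I.subtype_injective)

theorem comp_idealSMulMap (f : M →ₗ[A] N) :
    f ∘ₗ idealSMulMap I M = idealSMulMap I N ∘ₗ f.lTensor I := by
  ext
  simp [idealSMulMap]

theorem exact_idealSMulMap_mkQ :
    Exact (idealSMulMap I M) (I • ⊤ : Submodule A M).mkQ := by
  rw [LinearMap.exact_iff, Submodule.ker_mkQ, idealSMulMap_eq_lid_comp_rTensor]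
  exact (I.subtype_rTensor_range M).symm

theorem reduceModIdeal_injective_of_idealSMulMap_injective {i : K →ₗ[A] F} {π : F →ₗ[A] P}
    (hi : Injective i) (hiπ : Exact i π) (hπ : Surjective π)
    (hP : Injective (idealSMulMap I P)) : Injective (i.reduceModIdeal I) := by
  have hker : Exact (0 : PUnit →ₗ[A] I ⊗[A] P) (idealSMulMap I P) :=
    (LinearMap.exact_zero_iff_injective PUnit _).mpr hP
  have hsnake := SnakeLemma.exact_δ'_left _ _ _ _ _ (lTensor_exact I hiπ hπ) i π hiπ
    (comp_idealSMulMap i) (comp_idealSMulMap π) _ hker _ exact_idealSMulMap_mkQ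
    _ exact_idealSMulMap_mkQ (LinearMap.lTensor_surjective I hπ) hi
    ((i.reduceModIdeal I).restrictScalars A) rfl (Submodule.mkQ_surjective _)
  refine (injective_iff_map_eq_zero _).mpr fun x hx ↦ ?_
  obtain ⟨y, rfl⟩ := (hsnake x).mp hx
  rw [Subsingleton.elim y 0, map_zero]

theorem projective_of_finitePresentation_of_idealSMulMap_injective
    [Module.FinitePresentation A P] [Module.Projective (A ⧸ I) (P ⧸ (I • ⊤ : Submodule A P))]
    (hI : I ≤ Ideal.jacobson ⊥) (hP : Injective (idealSMulMap I P)) : Module.Projective A P := by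
  obtain ⟨n, π, hπ⟩ := Module.Finite.exists_fin' A P
  let i := (LinearMap.ker π).subtype
  have hi : Injective i := Submodule.subtype_injective _
  have hiπ : Exact i π := π.exact_subtype_ker_map
  have hK : Module.Finite A (LinearMap.ker π) := .of_fg (Module.FinitePresentation.fg_ker π hπ)
  have hsection := Module.projective_lifting_property (π.reduceModIdeal I) .id
    (reduceModIdeal_surjective hπ)
  have hretraction : ∃ r, r ∘ₗ i.reduceModIdeal I = .id :=
    ((reduceModIdeal_exact hiπ hπ).split_tfae (reduceModIdeal_injective_of_idealSMulMap_injective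
      hi hiπ hπ hP) (reduceModIdeal_surjective hπ) |>.out 0 1 rfl rfl).mp hsection
  obtain ⟨s, hs⟩ := (hiπ.split_tfae hi hπ |>.out 1 0 rfl rfl).mp
    (exists_retraction_of_exists_retraction_reduceModIdeal hI i hretraction)
  exact Module.Projective.of_split s π hs

end IdealTensor

section Flat

theorem injective_of_flat_of_ker_le_smul_top {Q : Type*} [AddCommGroup Q] [Module A Q]
    [Module.FinitePresentation A Q] [Module.Flat A P] (hI : I ≤ Ideal.jacobson ⊥)
    {q : Q →ₗ[A] P} (hq : Surjective q) (hker : LinearMap.ker q ≤ I • ⊤) : Injective q := by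
  refine (injective_iff_map_eq_zero q).mpr fun y hy ↦ ?_
  let Y := Submodule.span A {y}
  have hY : Y ≤ LinearMap.ker q := by simpa [Y] using hy
  have : Module.FinitePresentation A (Q ⧸ Y) :=
    Module.finitePresentation_of_surjective Y.mkQ Y.mkQ_surjective
      (by simpa using Submodule.fg_span_singleton y)
  obtain ⟨n, a, z, hza⟩ := Module.Flat.exists_factorization_of_finitePresentation (Y.liftQ q hY)
  obtain ⟨w, hw⟩ := Module.projective_lifting_property q z hq
  let g : Q →ₗ[A] Q := w ∘ₗ a ∘ₗ Y.mkQ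
  have hqg (x : Q) : q (g x) = q x :=
    calc q (g x) = z (a (Y.mkQ x)) := LinearMap.congr_fun hw _
      _ = q x := (LinearMap.congr_fun hza (Y.mkQ x)).symm
  have hg : g.reduceModIdeal I = .id := reduceModIdeal_eq_iff.mpr fun x ↦
    (Submodule.Quotient.eq _).mpr (hker (LinearMap.sub_mem_ker_iff.mpr (hqg x)))
  have hgy : g y = 0 := by
    have hy0 : Y.mkQ y = 0 :=
      (Submodule.Quotient.mk_eq_zero Y).mpr (Submodule.mem_span_singleton_self y)
    simp only [g, LinearMap.comp_apply, hy0, map_zero]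
  have hginj : Injective g :=
    (bijective_of_surjective_reduceModIdeal hI (by simpa only [hg] using! surjective_id)).1
  exact (map_eq_zero_iff g hginj).mp hgy

theorem exists_fg_le_map_eq {f : M →ₗ[A] N} {S : Submodule A M} (hS : (S.map f).FG) :
    ∃ T ≤ S, T.FG ∧ T.map f = S.map f := by
  classical
  rw [← Submodule.span_eq S, Submodule.map_span,
    Submodule.fg_span_iff_fg_span_finset_subset] at hS
  obtain ⟨_, hsub, hspan⟩ := hS
  obtain ⟨t, htS, rfl⟩ := Finset.subset_set_image_iff.mp hsub
  refine ⟨Submodule.span A t, Submodule.span_le.mpr htS, ⟨t, rfl⟩, ?_⟩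
  rw [Submodule.map_span, ← Finset.coe_image, ← hspan, ← Submodule.map_span, Submodule.span_eq]

theorem restrictScalars_ker_reduceModIdeal {π : F →ₗ[A] P} (hπ : Surjective π) :
    (LinearMap.ker (π.reduceModIdeal I)).restrictScalars A =
      (LinearMap.ker π).map (I • ⊤ : Submodule A F).mkQ := by
  ext x
  refine (reduceModIdeal_exact π.exact_subtype_ker_map hπ x).trans ?_
  simp [(Submodule.Quotient.mk_surjective _).exists]

theorem exists_fg_le_ker_le_sup_smul_top [Module.Finite A F]
    [Module.FinitePresentation (A ⧸ I) (P ⧸ (I • ⊤ : Submodule A P))]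
    {π : F →ₗ[A] P} (hπ : Surjective π) :
    ∃ T ≤ LinearMap.ker π, T.FG ∧ LinearMap.ker π ≤ I • ⊤ ⊔ T := by
  have : Module.Finite (A ⧸ I) (F ⧸ (I • ⊤ : Submodule A F)) := .of_restrictScalars_finite A _ _
  have hfg : ((LinearMap.ker π).map (I • ⊤ : Submodule A F).mkQ).FG := by
    rw [← restrictScalars_ker_reduceModIdeal hπ]
    exact (Module.FinitePresentation.fg_ker _ (reduceModIdeal_surjective hπ)).restrictScalars
  obtain ⟨T, hTπ, hT, hmap⟩ := exists_fg_le_map_eq hfg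
  refine ⟨T, hTπ, hT, ?_⟩
  rw [← Submodule.comap_map_mkQ, hmap]
  exact Submodule.le_comap_map _ _

theorem finitePresentation_of_flat_of_quotient [Module.Finite A P] [Module.Flat A P]
    [Module.FinitePresentation (A ⧸ I) (P ⧸ (I • ⊤ : Submodule A P))]
    (hI : I ≤ Ideal.jacobson ⊥) : Module.FinitePresentation A P := by
  obtain ⟨n, π, hπ⟩ := Module.Finite.exists_fin' A P
  obtain ⟨T, hTπ, hT, hπT⟩ := exists_fg_le_ker_le_sup_smul_top (I := I) hπ
  have : Module.FinitePresentation A ((Fin n → A) ⧸ T) :=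
    Module.finitePresentation_of_surjective T.mkQ T.mkQ_surjective (by simpa using hT)
  have hq : Surjective (T.liftQ π hTπ) := Surjective.of_comp (g := T.mkQ) hπ
  have hker : LinearMap.ker (T.liftQ π hTπ) ≤ I • ⊤ := by
    rwa [Submodule.ker_liftQ, Submodule.map_le_iff_le_comap,
      Submodule.comap_smul_top_of_surjective I T.mkQ T.mkQ_surjective, Submodule.ker_mkQ]
  exact Module.FinitePresentation.of_equiv
    (.ofBijective _ ⟨injective_of_flat_of_ker_le_smul_top hI hq hker, hq⟩)

end Flat

theorem stmt_3_general (I : Ideal A) (hI : I ≤ Ideal.jacobson ⊥) [Module.Finite A P]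
    [Module.Projective (A ⧸ I) (P ⧸ (I • ⊤ : Submodule A P))] :
    List.TFAE
      [ Module.Projective A P,
        Module.Flat A P,
        Module.FinitePresentation A P ∧ Injective (idealSMulMap I P),
        Surjective (reduceDual I : (P →ₗ[A] A) → _) ] := by
  tfae_have 1 → 2 := fun _ ↦ inferInstance
  tfae_have 2 → 3 := fun _ ↦
    have := Module.finitePresentation_of_projective (A ⧸ I) (P ⧸ (I • ⊤ : Submodule A P))
    ⟨finitePresentation_of_flat_of_quotient hI, idealSMulMap_injective_of_flat⟩
  tfae_have 3 → 1 := fun ⟨_, hinj⟩ ↦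
    projective_of_finitePresentation_of_idealSMulMap_injective hI hinj
  tfae_have 1 → 4 := fun _ ↦ reduceDual_surjective_of_projective
  tfae_have 4 → 1 := projective_of_reduceDual_surjective hI
  tfae_finish

/-- Let A be a commutative ring, I an ideal contained in the Jacobson radical
of A, and P a finitely generated A-module with P/IP projective over A/I. Then the following
are equivalent: (i) P is projective; (ii) P is flat; (iii) P is finitely presented and the
natural map I ⊗_A P → P is injective; (iv) the natural reduction map
Hom_A(P, A) → Hom(P/IP, A/I) is surjective. -/
theorem stmt_3 (A : Type) [CommRing A] (I : Ideal A)
    (hI : I ≤ Ideal.jacobson ⊥)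
    (P : Type) [AddCommGroup P] [Module A P] (hfin : Module.Finite A P)
    (hproj : Module.Projective (A ⧸ I) (P ⧸ (I • ⊤ : Submodule A P))) :
    List.TFAE
      [ Module.Projective A P,
        Module.Flat A P,
        Module.FinitePresentation A P ∧
          Function.Injective (TensorProduct.lift ((LinearMap.lsmul A P).comp I.subtype)),
        Function.Surjective (fun φ : P →ₗ[A] A =>
          Submodule.mapQ (I • ⊤ : Submodule A P) (I : Submodule A A) φ
            (Submodule.smul_le.mpr fun r hr x _ => by
              simpa [Submodule.mem_comap, smul_eq_mul] using I.mul_mem_right (φ x) hr)) ] := by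
  exact stmt_3_general I hI
end

section
/- Let φ : A → B be a flat homomorphism of commutative rings and f ∈ A. Call a ring homomorphism A → B weakly unramified if B is flat as a module over B ⊗_A B (the module structure being given by the multiplication map B ⊗_A B → B). If the induced homomorphisms A/fA → B/fB and A_f → B_f are both weakly unramified (i.e. B/fB is flat over (B/fB) ⊗_{A/fA} (B/fB), and B_f is flat over B_f ⊗_{A_f} B_f), then A → B is weakly unramified, i.e. B is flat as a B ⊗_A B-module. -/
/-- A ring homomorphism A → B of commutative rings is *weakly unramified* if B is flat as a
module over B ⊗_A B, the module structure being given by the multiplication map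
μ : B ⊗_A B → B. -/
def WeaklyUnramified (A B : Type) [CommRing A] [CommRing B] [Algebra A B] : Prop :=
  letI : Module (TensorProduct A B B) B :=
    ((Algebra.TensorProduct.lmul' A (S := B)).toRingHom).toModule
  Module.Flat (TensorProduct A B B) B

/-!
Let `R = B ⊗_A B` and `M = B`, both flat over `A`, and let `K ⊆ R` be an ideal. Elements of
`Ker(M ⊗ K → M)` are `f`-power torsion because `M_f` is flat over `R_f`, so it suffices to show
that this kernel has no `f`-torsion. Since `M/fM` is flat over `R/fR`, tensoring with `M` preserves
injections into modules killed by `f`; since `M` is also flat over `A`, it preserves the inclusion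
`fF ⊆ F` for `F` free, hence every inclusion `K ⊆ L` with `fL ⊆ K`. Applied to `fK ⊆ K`, this shows
that the `f`-torsion of `M ⊗ K` comes from `M ⊗ K[f]`, and `M ⊗ K[f]` embeds into `M ⊗ R[f]`.
Finally `R[f] = A[f]R` by flatness of `R` over `A`, so `M ⊗ R[f] → M` is injective by flatness of
`M` over `A`.
-/

open TensorProduct Pointwise

section SubmoduleTensor

variable {R M F L : Type*} [CommRing R] [AddCommGroup M] [Module R M]
  [AddCommGroup F] [Module R F] [AddCommGroup L] [Module R L]

theorem lTensor_subtype_injective_of_comap {s : F →ₗ[R] L} (hs : Function.Surjective s)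
    {K : Submodule R L} (hK : Function.Injective ((K.comap s).subtype.lTensor M)) :
    Function.Injective (K.subtype.lTensor M) := by
  rw [injective_iff_map_eq_zero]
  intro x hx
  obtain ⟨y, rfl⟩ := LinearMap.lTensor_surjective M
    (s.submoduleComap_surjective_of_surjective K hs) x
  have hsy : s.lTensor M ((K.comap s).subtype.lTensor M y) = 0 := by
    rwa [← LinearMap.lTensor_comp_apply] at hx ⊢
  obtain ⟨z, hz⟩ := (lTensor_exact M s.exact_subtype_ker_map hs _).1 hsy
  have hle : LinearMap.ker s ≤ K.comap s := s.ker_le_comap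
  have hzy : (Submodule.inclusion hle).lTensor M z = y := by
    apply hK
    rw [← hz, ← LinearMap.lTensor_comp_apply, Submodule.subtype_comp_inclusion]
  have hcomp : s.submoduleComap K ∘ₗ Submodule.inclusion hle = 0 := by
    ext k
    exact k.2
  rw [← hzy, ← LinearMap.lTensor_comp_apply, hcomp, LinearMap.lTensor_zero, LinearMap.zero_apply]

theorem lTensor_subtype_injective_of_map_mkQ {N K : Submodule R L} (hle : N ≤ K)
    (hN : Function.Injective (N.subtype.lTensor M))
    (hK : Function.Injective ((K.map N.mkQ).subtype.lTensor M)) :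
    Function.Injective (K.subtype.lTensor M) := by
  have hexact : Function.Exact (Submodule.inclusion hle) (N.mkQ.submoduleMap K) := by
    intro k
    simp [Subtype.ext_iff, Set.mem_range]
  rw [injective_iff_map_eq_zero]
  intro x hx
  have hmap : (N.mkQ.submoduleMap K).lTensor M x = 0 := by
    apply hK
    rw [map_zero, ← map_zero (N.mkQ.lTensor M), ← hx, ← LinearMap.lTensor_comp_apply,
      ← LinearMap.lTensor_comp_apply]
    rfl
  obtain ⟨y, rfl⟩ := (lTensor_exact M hexact (N.mkQ.submoduleMap_surjective K) _).1 hmap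
  rw [← LinearMap.lTensor_comp_apply, Submodule.subtype_comp_inclusion] at hx
  rw [hN (hx.trans (map_zero _).symm), map_zero]

theorem lTensor_injective_of_flat_baseChange {S K N : Type*} [CommRing S] [Algebra R S]
    [Module.Flat S (S ⊗[R] M)]
    [AddCommGroup K] [Module R K] [Module S K] [IsScalarTower R S K]
    [AddCommGroup N] [Module R N] [Module S N] [IsScalarTower R S N]
    {i : K →ₗ[S] N} (hi : Function.Injective i) :
    Function.Injective ((i.restrictScalars R).lTensor M) := by
  rw [LinearMap.lTensor_inj_iff_rTensor_inj]
  let eK := AlgebraTensorModule.cancelBaseChange R S S K M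
  let eN := AlgebraTensorModule.cancelBaseChange R S S N M
  have hcomm : AlgebraTensorModule.rTensor R M i ∘ₗ eK.toLinearMap =
      eN.toLinearMap ∘ₗ i.rTensor (S ⊗[R] M) := by
    ext; simp [eK, eN]
  have hinj : Function.Injective (AlgebraTensorModule.rTensor R M i ∘ eK) := by
    rw [← LinearEquiv.coe_coe, ← LinearMap.coe_comp, hcomm]
    exact eN.injective.comp (Module.Flat.rTensor_preserves_injective_linearMap i hi)
  exact hinj.of_comp_right eK.surjective

theorem lTensor_injective_of_isTorsionBySet {I : Ideal R}
    [Module.Flat (R ⧸ I) ((R ⧸ I) ⊗[R] M)] (hL : Module.IsTorsionBySet R L I)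
    {i : F →ₗ[R] L} (hi : Function.Injective i) :
    Function.Injective (i.lTensor M) := by
  have hF : Module.IsTorsionBySet R F I := fun x a ↦ hi (by rw [map_smul, hL, map_zero])
  let := hL.module
  let := hF.module
  exact lTensor_injective_of_flat_baseChange
    (i := i.extendScalarsOfSurjective (S := R ⧸ I) Ideal.Quotient.mk_surjective) hi

end SubmoduleTensor

section FlatBase

variable {A R L : Type*} [CommRing A] [CommRing R] [Algebra A R]
  [AddCommGroup L] [Module R L] [Module A L] [IsScalarTower A R L]

theorem torsionBy_algebraMap_eq_map_smul_top [Module.Flat A L] (f : A) :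
    Submodule.torsionBy R L (algebraMap A R f) =
      Ideal.map (algebraMap A R) (Submodule.torsionBy A A f) • (⊤ : Submodule R L) := by
  apply le_antisymm
  · intro x hx
    have hfx : ∑ i : Unit, (fun _ ↦ f) i • (fun _ ↦ x) i = 0 := by simpa using hx
    obtain ⟨k, a, y, hxy, hfa⟩ := Module.Flat.isTrivialRelation_of_sum_smul_eq_zero hfx
    have hx_eq : x = ∑ j, a () j • y j := hxy ()
    rw [hx_eq]
    refine sum_mem fun j _ ↦ ?_
    rw [← algebraMap_smul R (a () j)]
    exact Submodule.smul_mem_smul (Ideal.mem_map_of_mem _ (by simpa using hfa j)) trivial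
  · rw [Submodule.smul_le]
    intro r hr x _
    suffices hle : Ideal.map (algebraMap A R) (Submodule.torsionBy A A f) ≤
        Submodule.torsionBy R R (algebraMap A R f) by
      have hfr : algebraMap A R f * r = 0 := hle hr
      rw [Submodule.mem_torsionBy_iff, smul_smul, hfr, zero_smul]
    rw [Ideal.map_le_iff_le_comap]
    intro a ha
    have hfa : f * a = 0 := ha
    simp [← map_mul, hfa]

variable (R L) in
/-- Scalar multiplication `I × L → IL` as a bilinear map, for an ideal `I` of the base ring `A`
and an `R`-module `L`; here `IL` is the `R`-submodule `(IR)L` of `L`. -/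
def smulToMapSMulTop (I : Ideal A) :
    I →ₗ[A] L →ₗ[R] (I.map (algebraMap A R) • ⊤ : Submodule R L) :=
  LinearMap.mk₂' A R
    (fun a x ↦ ⟨algebraMap A R a • x,
      Submodule.smul_mem_smul (Ideal.mem_map_of_mem _ a.2) trivial⟩)
    (fun a b x ↦ by ext; simp [add_smul])
    (fun c a x ↦ by ext; simp [mul_smul])
    (fun a x y ↦ by ext; simp)
    (fun r a x ↦ by ext; simp [smul_comm r])

theorem iSup_range_smulToMapSMulTop (I : Ideal A) :
    ⨆ a, LinearMap.range (smulToMapSMulTop R L I a) = ⊤ := by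
  apply Submodule.map_injective_of_injective (Submodule.subtype_injective _)
  rw [Submodule.map_iSup, Submodule.map_subtype_top]
  apply le_antisymm
  · exact iSup_le fun a ↦ Submodule.map_subtype_le _ _
  · refine (Submodule.span_smul_eq _ _).trans_le (Submodule.set_smul_le _ _ _ ?_)
    rintro _ x ⟨a, ha, rfl⟩ -
    exact Submodule.mem_iSup_of_mem ⟨a, ha⟩ ⟨_, ⟨x, rfl⟩, rfl⟩

theorem subtype_comp_smulToMapSMulTop (I : Ideal A) (a : I) :
    Submodule.subtype _ ∘ₗ smulToMapSMulTop R L I a = algebraMap A R a • LinearMap.id := rfl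

variable (M : Type*) [AddCommGroup M] [Module R M] [Module A M] [IsScalarTower A R M]

variable (R L) in
/-- The comparison map `I ⊗ (M ⊗ L) → M ⊗ IL`, `a ⊗ (m ⊗ x) ↦ m ⊗ ax`, by which flatness of
`M ⊗ L` over `A` controls `M ⊗ IL → M ⊗ L`. -/
noncomputable def tensorSMulToMapSMulTop (I : Ideal A) :
    I ⊗[A] (M ⊗[R] L) →ₗ[A] M ⊗[R] (I.map (algebraMap A R) • ⊤ : Submodule R L) :=
  TensorProduct.lift (LinearMap.restrictScalarsₗ A R _ _ A ∘ₗ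
    (LinearMap.lTensorHom M).restrictScalars A ∘ₗ smulToMapSMulTop R L I)

theorem tensorSMulToMapSMulTop_surjective (I : Ideal A) :
    Function.Surjective (tensorSMulToMapSMulTop R L M I) := by
  suffices htmul : ∀ m x, m ⊗ₜ x ∈ LinearMap.range (tensorSMulToMapSMulTop R L M I) by
    intro t
    induction t with
    | zero => exact ⟨0, map_zero _⟩
    | tmul m x => exact htmul m x
    | add s t hs ht => exact (LinearMap.range _).add_mem hs ht
  intro m x
  have hx : x ∈ ⨆ a, LinearMap.range (smulToMapSMulTop R L I a) := by
    rw [iSup_range_smulToMapSMulTop]; trivial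
  induction hx using Submodule.iSup_induction' with
  | mem a x hx =>
    obtain ⟨y, rfl⟩ := hx
    exact ⟨a ⊗ₜ (m ⊗ₜ y), rfl⟩
  | zero => rw [tmul_zero]; exact zero_mem _
  | add x y _ _ hx hy => rw [tmul_add]; exact add_mem hx hy

theorem lTensor_map_smul_top_subtype_injective [Module.Flat A (M ⊗[R] L)] (I : Ideal A) :
    Function.Injective ((I.map (algebraMap A R) • ⊤ : Submodule R L).subtype.lTensor M) := by
  have hcomp : ((I.map (algebraMap A R) • ⊤ : Submodule R L).subtype.lTensor M).restrictScalars A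
      ∘ₗ tensorSMulToMapSMulTop R L M I =
      (TensorProduct.lid A (M ⊗[R] L)).toLinearMap ∘ₗ I.subtype.rTensor (M ⊗[R] L) := by
    refine TensorProduct.ext' fun a t ↦ ?_
    change LinearMap.lTensor M _ ((smulToMapSMulTop R L I a).lTensor M t) = (a : A) • t
    rw [← LinearMap.lTensor_comp_apply, subtype_comp_smulToMapSMulTop, LinearMap.lTensor_smul,
      LinearMap.lTensor_id, LinearMap.smul_apply, LinearMap.id_apply, algebraMap_smul]
  have hinj : Function.Injective ((I.map (algebraMap A R) • ⊤ : Submodule R L).subtype.lTensor M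
      ∘ tensorSMulToMapSMulTop R L M I) := by
    rw [← LinearMap.coe_restrictScalars A, ← LinearMap.coe_comp, hcomp]
    exact (TensorProduct.lid A _).injective.comp
      (Module.Flat.rTensor_preserves_injective_linearMap _ I.subtype_injective)
  exact hinj.of_comp_right (tensorSMulToMapSMulTop_surjective M I)

end FlatBase

section TorsionKernel

variable {A R M L : Type*} [CommRing A] [CommRing R] [Algebra A R]
  [AddCommGroup M] [Module R M] [Module A M] [IsScalarTower A R M]
  [AddCommGroup L] [Module R L]

theorem flat_tensorProduct_finsupp [Module.Flat A M] (ι : Type*) :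
    Module.Flat A (M ⊗[R] (ι →₀ R)) := by
  classical
  have : Module.Flat A (ι →₀ M) := .of_linearEquiv (finsuppLequivDFinsupp A)
  exact .of_linearEquiv ((TensorProduct.finsuppScalarRight R R M ι).restrictScalars A)

theorem lTensor_subtype_injective_of_smul_mem [Module.Flat A M] {f : A}
    [Module.Flat (R ⧸ Ideal.span {algebraMap A R f})
      ((R ⧸ Ideal.span {algebraMap A R f}) ⊗[R] M)]
    {K : Submodule R L} (hK : ∀ x, algebraMap A R f • x ∈ K) :
    Function.Injective (K.subtype.lTensor M) := by
  let N : Submodule R (L →₀ R) := (Ideal.span {f}).map (algebraMap A R) • ⊤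
  have hN : N = algebraMap A R f • ⊤ := by
    simp only [N, Ideal.map_span, Set.image_singleton, Submodule.ideal_span_singleton_smul]
  have hNK : N ≤ K.comap (Finsupp.linearCombination R id) := by
    rw [hN]
    rintro _ ⟨x, -, rfl⟩
    simpa only [Submodule.mem_comap, DistribSMul.toLinearMap_apply, map_smul] using hK _
  have hquot : Module.IsTorsionBySet R ((L →₀ R) ⧸ N)
      (Ideal.span {algebraMap A R f} : Ideal R) := by
    rw [Module.isTorsionBySet_span_singleton_iff]
    intro x
    obtain ⟨x, rfl⟩ := N.mkQ_surjective x
    rw [← map_smul, Submodule.mkQ_apply, Submodule.Quotient.mk_eq_zero, hN]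
    exact Submodule.smul_mem_pointwise_smul _ _ _ trivial
  have : Module.Flat A (M ⊗[R] (L →₀ R)) := flat_tensorProduct_finsupp L
  exact lTensor_subtype_injective_of_comap (Finsupp.linearCombination_id_surjective R L)
    (lTensor_subtype_injective_of_map_mkQ hNK (lTensor_map_smul_top_subtype_injective M _)
      (lTensor_injective_of_isTorsionBySet hquot (Submodule.subtype_injective _)))

theorem mem_range_lTensor_torsionBy_of_smul_eq_zero [Module.Flat A M] {f : A}
    [Module.Flat (R ⧸ Ideal.span {algebraMap A R f})
      ((R ⧸ Ideal.span {algebraMap A R f}) ⊗[R] M)]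
    {x : M ⊗[R] L} (hx : algebraMap A R f • x = 0) :
    x ∈ LinearMap.range ((Submodule.torsionBy R L (algebraMap A R f)).subtype.lTensor M) := by
  let g : L →ₗ[R] L := LinearMap.lsmul R L (algebraMap A R f)
  have hg : (LinearMap.range g).subtype ∘ₗ g.rangeRestrict = algebraMap A R f • LinearMap.id := rfl
  have hexact : Function.Exact (Submodule.torsionBy R L (algebraMap A R f)).subtype
      g.rangeRestrict := by
    rw [LinearMap.exact_iff, LinearMap.ker_rangeRestrict, Submodule.range_subtype]
    rfl
  refine (lTensor_exact M hexact g.surjective_rangeRestrict x).1 ?_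
  apply lTensor_subtype_injective_of_smul_mem (K := LinearMap.range g) (f := f) (fun y ↦ ⟨y, rfl⟩)
  rw [← LinearMap.lTensor_comp_apply, hg, LinearMap.lTensor_smul, LinearMap.lTensor_id,
    LinearMap.smul_apply, LinearMap.id_apply, hx, map_zero]

variable [Module A L] [IsScalarTower A R L]

theorem eq_zero_of_lTensor_subtype_eq_zero_of_smul_eq_zero [Module.Flat A M] [Module.Flat A L]
    [Module.Flat A (M ⊗[R] L)] {f : A}
    [Module.Flat (R ⧸ Ideal.span {algebraMap A R f})
      ((R ⧸ Ideal.span {algebraMap A R f}) ⊗[R] M)]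
    {K : Submodule R L} {x : M ⊗[R] K} (hx : K.subtype.lTensor M x = 0)
    (hfx : algebraMap A R f • x = 0) : x = 0 := by
  obtain ⟨y, rfl⟩ := mem_range_lTensor_torsionBy_of_smul_eq_zero hfx
  let i : Submodule.torsionBy R K (algebraMap A R f) →ₗ[R]
      Submodule.torsionBy R L (algebraMap A R f) :=
    K.subtype.restrict fun k hk ↦ congrArg Subtype.val hk
  have hi : Function.Injective (i.lTensor M) := by
    refine lTensor_injective_of_isTorsionBySet (I := Ideal.span {algebraMap A R f}) ?_ ?_
    · rw [Module.isTorsionBySet_span_singleton_iff]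
      exact fun t ↦ Subtype.ext t.2
    · exact .of_comp (f := Subtype.val) (K.subtype_injective.comp (Submodule.subtype_injective _))
  have htorsion : Function.Injective
      ((Submodule.torsionBy R L (algebraMap A R f)).subtype.lTensor M) := by
    rw [torsionBy_algebraMap_eq_map_smul_top]
    exact lTensor_map_smul_top_subtype_injective M _
  have hy : y = 0 := by
    apply hi
    apply htorsion
    rw [← LinearMap.lTensor_comp_apply] at hx ⊢
    rw [map_zero, map_zero]
    exact hx
  rw [hy, map_zero]

theorem eq_zero_of_lTensor_subtype_eq_zero_of_pow_smul_eq_zero [Module.Flat A M] [Module.Flat A L]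
    [Module.Flat A (M ⊗[R] L)] {f : A}
    [Module.Flat (R ⧸ Ideal.span {algebraMap A R f})
      ((R ⧸ Ideal.span {algebraMap A R f}) ⊗[R] M)]
    {K : Submodule R L} {x : M ⊗[R] K} (hx : K.subtype.lTensor M x = 0)
    (n : ℕ) (hfx : algebraMap A R f ^ n • x = 0) : x = 0 := by
  induction n with
  | zero => simpa using hfx
  | succ n ih =>
    refine ih (eq_zero_of_lTensor_subtype_eq_zero_of_smul_eq_zero (f := f) ?_ ?_)
    · rw [map_smul, hx, smul_zero]
    · rw [smul_smul, ← pow_succ', hfx]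

theorem flat_of_flat_quotient_of_flat_localized [Module.Flat A R] [Module.Flat A M] (f : A)
    [Module.Flat (R ⧸ Ideal.span {algebraMap A R f})
      ((R ⧸ Ideal.span {algebraMap A R f}) ⊗[R] M)]
    {M' : Type*} [AddCommGroup M'] [Module R M'] [Module.Flat R M'] (l : M →ₗ[R] M')
    [IsLocalizedModule (Submonoid.powers (algebraMap A R f)) l] :
    Module.Flat R M := by
  rw [Module.Flat.iff_lTensor_injective']
  intro I
  rw [injective_iff_map_eq_zero]
  intro x hx
  have hlx : l.rTensor I x = 0 := by
    apply Module.Flat.lTensor_preserves_injective_linearMap (M := M') I.subtype I.subtype_injective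
    rw [← LinearMap.comp_apply, LinearMap.lTensor_comp_rTensor, ← LinearMap.rTensor_comp_lTensor,
      LinearMap.comp_apply, hx, map_zero, map_zero]
  have : IsLocalizedModule (Submonoid.powers (algebraMap A R f)) (l.rTensor I) :=
    inferInstanceAs (IsLocalizedModule _ (AlgebraTensorModule.rTensor R I l))
  obtain ⟨⟨_, n, rfl⟩, hn⟩ :=
    (IsLocalizedModule.eq_zero_iff (Submonoid.powers (algebraMap A R f)) (l.rTensor I)).1 hlx
  have : Module.Flat A (M ⊗[R] R) :=
    .of_linearEquiv ((TensorProduct.rid R M).restrictScalars A)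
  exact eq_zero_of_lTensor_subtype_eq_zero_of_pow_smul_eq_zero hx n hn

end TorsionKernel

theorem flat_tensorProduct_of_algEquiv {R S S' : Type*} (M : Type*) [CommRing R] [CommRing S]
    [CommRing S'] [Algebra R S] [Algebra R S'] [AddCommGroup M] [Module R M] (e : S ≃ₐ[R] S')
    [Module.Flat S (S ⊗[R] M)] : Module.Flat S' (S' ⊗[R] M) := by
  let := e.toRingHom.toAlgebra
  have : IsScalarTower R S S' := .of_algebraMap_eq fun r ↦ (e.commutes r).symm
  exact .of_linearEquiv (AlgebraTensorModule.cancelBaseChange R S S' S' M).symm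

section Pushout

variable {A A₁ B B₁ : Type*} [CommRing A] [CommRing A₁] [CommRing B] [CommRing B₁]
  [Algebra A A₁] [Algebra A B] [Algebra A B₁] [Algebra A₁ B₁] [Algebra B B₁]
  [IsScalarTower A A₁ B₁] [IsScalarTower A B B₁]

attribute [local instance] Algebra.TensorProduct.rightAlgebra in
theorem isPushout_quotient (I : Ideal A) [Algebra (A ⧸ I) B₁] [IsScalarTower A (A ⧸ I) B₁]
    (hsurj : Function.Surjective (algebraMap B B₁))
    (hker : RingHom.ker (algebraMap B B₁) = I.map (algebraMap A B)) :
    Algebra.IsPushout A (A ⧸ I) B B₁ := by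
  let e : B ⊗[A] (A ⧸ I) ≃ₐ[B] B₁ :=
    (Algebra.TensorProduct.quotIdealMapEquivTensorQuot B I).symm.trans <|
      (Ideal.quotientEquivAlgOfEq B hker.symm).trans <|
      Ideal.quotientKerAlgEquivOfSurjective (f := Algebra.ofId B B₁) hsurj
  refine .symm (.of_equiv e ?_)
  ext a
  change e (algebraMap (A ⧸ I) _ (algebraMap A (A ⧸ I) a)) =
    algebraMap (A ⧸ I) B₁ (algebraMap A (A ⧸ I) a)
  rw [← IsScalarTower.algebraMap_apply, ← IsScalarTower.algebraMap_apply]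
  exact (e.restrictScalars A).commutes a

theorem isPushout_away (f : A) [IsLocalization.Away f A₁]
    [IsLocalization.Away (algebraMap A B f) B₁] : Algebra.IsPushout A A₁ B B₁ := by
  have : IsLocalization (Algebra.algebraMapSubmonoid B (Submonoid.powers f)) B₁ := by
    rw [Algebra.algebraMapSubmonoid_powers]
    infer_instance
  exact .symm (Algebra.isPushout_of_isLocalization (Submonoid.powers f) A₁ B B₁)

variable (A A₁ B B₁) in
/-- The map `B ⊗[A] B → B₁ ⊗[A₁] B₁` of enveloping algebras induced by a commutative square
`A → B`, `A₁ → B₁` of rings. -/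
noncomputable abbrev envelopingMap : B ⊗[A] B →ₐ[A] B₁ ⊗[A₁] B₁ :=
  (Algebra.TensorProduct.mapOfCompatibleSMul A₁ A A B₁ B₁).comp
    (Algebra.TensorProduct.map (IsScalarTower.toAlgHom A B B₁) (IsScalarTower.toAlgHom A B B₁))

attribute [local instance] Algebra.TensorProduct.rightAlgebra in
theorem isPushout_enveloping [Algebra.IsPushout A A₁ B B₁] :
    letI := (envelopingMap A A₁ B B₁).toRingHom.toAlgebra
    letI : IsScalarTower A (B ⊗[A] B) (B₁ ⊗[A₁] B₁) := .of_algHom (envelopingMap A A₁ B B₁)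
    Algebra.IsPushout A A₁ (B ⊗[A] B) (B₁ ⊗[A₁] B₁) := by
  let := (envelopingMap A A₁ B B₁).toRingHom.toAlgebra
  have : IsScalarTower A (B ⊗[A] B) (B₁ ⊗[A₁] B₁) := .of_algHom (envelopingMap A A₁ B B₁)
  let e : A₁ ⊗[A] (B ⊗[A] B) ≃ₐ[A₁] B₁ ⊗[A₁] B₁ :=
    (Algebra.TensorProduct.assoc A A A₁ A₁ B B).symm.trans <|
    (Algebra.TensorProduct.cancelBaseChange A A₁ A₁ (A₁ ⊗[A] B) B).symm.trans <|
    Algebra.TensorProduct.congr (Algebra.IsPushout.equiv A A₁ B B₁)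
      (Algebra.IsPushout.equiv A A₁ B B₁)
  refine .of_equiv e ?_
  ext b
  · simp [e, RingHom.algebraMap_toAlgebra, Algebra.IsPushout.equiv_tmul]
  · simp [e, RingHom.algebraMap_toAlgebra, Algebra.IsPushout.equiv_tmul]

theorem lmul'_comp_envelopingMap :
    (Algebra.TensorProduct.lmul' A₁ (S := B₁)).toRingHom.comp (envelopingMap A A₁ B B₁).toRingHom =
      (algebraMap B B₁).comp (Algebra.TensorProduct.lmul' A (S := B)).toRingHom := by
  ext b <;> simp

variable {E E₁ : Type*} [CommRing E] [CommRing E₁] [Algebra A E] [Algebra A E₁] [Algebra A₁ E₁]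
  [Algebra E E₁] [IsScalarTower A A₁ E₁] [IsScalarTower A E E₁] [Algebra E B] [Algebra E₁ B₁]
  [Algebra E B₁] [IsScalarTower A E B] [IsScalarTower A₁ E₁ B₁] [IsScalarTower E B B₁]
  [IsScalarTower E E₁ B₁]

variable (A A₁) in
theorem isBaseChange_of_isPushout [Algebra.IsPushout A A₁ E E₁] [Algebra.IsPushout A A₁ B B₁] :
    IsBaseChange E₁ (IsScalarTower.toAlgHom E B B₁).toLinearMap := by
  have : IsScalarTower A E₁ B₁ := .to₁₃₄ A A₁ E₁ B₁
  have : Algebra.IsPushout A E A₁ E₁ := .symm inferInstance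
  have : Algebra.IsPushout A B A₁ B₁ := .symm inferInstance
  have : Algebra.IsPushout E B E₁ B₁ := (Algebra.IsPushout.comp_iff A E A₁ E₁).1 this
  exact this.symm.out

theorem flat_quotient_tensorProduct_of_isPushout (I : Ideal A) [Algebra (A ⧸ I) E₁]
    [Algebra (A ⧸ I) B₁] [IsScalarTower A (A ⧸ I) E₁] [IsScalarTower A (A ⧸ I) B₁]
    [IsScalarTower (A ⧸ I) E₁ B₁]
    [Algebra.IsPushout A (A ⧸ I) E E₁] [Algebra.IsPushout A (A ⧸ I) B B₁] [Module.Flat E₁ B₁] :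
    Module.Flat (E ⧸ I.map (algebraMap A E)) ((E ⧸ I.map (algebraMap A E)) ⊗[E] B) := by
  have : Algebra.IsPushout A E (A ⧸ I) E₁ := .symm inferInstance
  let e : E₁ ≃ₐ[E] E ⧸ I.map (algebraMap A E) :=
    (Algebra.IsPushout.equiv A E (A ⧸ I) E₁).symm.trans
      (Algebra.TensorProduct.quotIdealMapEquivTensorQuot E I).symm
  have : Module.Flat E₁ (E₁ ⊗[E] B) :=
    .of_linearEquiv (isBaseChange_of_isPushout A (A ⧸ I) (B := B) (B₁ := B₁)).equiv
  exact flat_tensorProduct_of_algEquiv B e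

end Pushout

theorem flat_of_flat_quotient_of_flat_away {A E B E₀ B₀ A₁ E₁ B₁ : Type*} [CommRing A]
    [CommRing E] [CommRing B] [CommRing E₀] [CommRing B₀] [CommRing A₁] [CommRing E₁] [CommRing B₁]
    [Algebra A E] [Algebra A B] [Algebra E B] [IsScalarTower A E B]
    [Module.Flat A E] [Module.Flat A B] (f : A)
    [Algebra A E₀] [Algebra (A ⧸ Ideal.span {f}) E₀] [Algebra E E₀]
    [IsScalarTower A (A ⧸ Ideal.span {f}) E₀] [IsScalarTower A E E₀]
    [Algebra A B₀] [Algebra (A ⧸ Ideal.span {f}) B₀] [Algebra B B₀]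
    [IsScalarTower A (A ⧸ Ideal.span {f}) B₀] [IsScalarTower A B B₀]
    [Algebra E₀ B₀] [IsScalarTower (A ⧸ Ideal.span {f}) E₀ B₀]
    [Algebra.IsPushout A (A ⧸ Ideal.span {f}) E E₀]
    [Algebra.IsPushout A (A ⧸ Ideal.span {f}) B B₀] [Module.Flat E₀ B₀]
    [Algebra A A₁] [IsLocalization.Away f A₁]
    [Algebra A E₁] [Algebra A₁ E₁] [Algebra E E₁]
    [IsScalarTower A A₁ E₁] [IsScalarTower A E E₁]
    [Algebra A B₁] [Algebra A₁ B₁] [Algebra B B₁]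
    [IsScalarTower A A₁ B₁] [IsScalarTower A B B₁]
    [Algebra E₁ B₁] [Algebra.IsPushout A A₁ E E₁] [Algebra.IsPushout A A₁ B B₁]
    [Module.Flat E₁ B₁]
    (comm₀ : (algebraMap E₀ B₀).comp (algebraMap E E₀) = (algebraMap B B₀).comp (algebraMap E B))
    (comm₁ : (algebraMap E₁ B₁).comp (algebraMap E E₁) = (algebraMap B B₁).comp (algebraMap E B)) :
    Module.Flat E B := by
  algebraize [(algebraMap B B₀).comp (algebraMap E B), (algebraMap B B₁).comp (algebraMap E B)]
  have : IsScalarTower E E₀ B₀ := .of_algebraMap_eq' comm₀.symm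
  have : IsScalarTower E E₁ B₁ := .of_algebraMap_eq' comm₁.symm
  have : Module.Flat (E ⧸ Ideal.span {algebraMap A E f})
      ((E ⧸ Ideal.span {algebraMap A E f}) ⊗[E] B) := by
    rw [← Set.image_singleton, ← Ideal.map_span]
    exact flat_quotient_tensorProduct_of_isPushout _ (E₁ := E₀) (B₁ := B₀)
  have : Module.Flat E B₁ := by
    have : Module.Flat A A₁ := IsLocalization.flat A₁ (Submonoid.powers f)
    have : Algebra.IsPushout A E A₁ E₁ := .symm inferInstance
    have : Module.Flat E E₁ := .isBaseChange A E A₁ E₁ this.out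
    exact .trans E E₁ B₁
  have : IsLocalization (Algebra.algebraMapSubmonoid B (Submonoid.powers f)) B₁ :=
    (Algebra.isLocalization_iff_isPushout (Submonoid.powers f) A₁).2 (.symm inferInstance)
  have : IsLocalizedModule (Submonoid.powers (algebraMap A E f))
      (IsScalarTower.toAlgHom E B B₁).toLinearMap := by
    rw [isLocalizedModule_iff_isLocalization, Algebra.algebraMapSubmonoid_powers,
      ← IsScalarTower.algebraMap_apply A E B, ← Algebra.algebraMapSubmonoid_powers]
    infer_instance
  exact flat_of_flat_quotient_of_flat_localized f (IsScalarTower.toAlgHom E B B₁).toLinearMap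

theorem flat_lmul'_of_flat_quotient_of_flat_away {A B B₀ A₁ B₁ : Type*} [CommRing A]
    [CommRing B] [CommRing B₀] [CommRing A₁] [CommRing B₁] [Algebra A B] [Module.Flat A B] (f : A)
    [Algebra A B₀] [Algebra (A ⧸ Ideal.span {f}) B₀] [Algebra B B₀]
    [IsScalarTower A (A ⧸ Ideal.span {f}) B₀] [IsScalarTower A B B₀]
    [Algebra.IsPushout A (A ⧸ Ideal.span {f}) B B₀]
    [Algebra A A₁] [IsLocalization.Away f A₁]
    [Algebra A B₁] [Algebra A₁ B₁] [Algebra B B₁]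
    [IsScalarTower A A₁ B₁] [IsScalarTower A B B₁] [Algebra.IsPushout A A₁ B B₁]
    (h₀ : (Algebra.TensorProduct.lmul' (A ⧸ Ideal.span {f}) (S := B₀)).toRingHom.Flat)
    (h₁ : (Algebra.TensorProduct.lmul' A₁ (S := B₁)).toRingHom.Flat) :
    (Algebra.TensorProduct.lmul' A (S := B)).toRingHom.Flat := by
  algebraize [(Algebra.TensorProduct.lmul' A (S := B)).toRingHom,
    (Algebra.TensorProduct.lmul' (A ⧸ Ideal.span {f}) (S := B₀)).toRingHom,
    (Algebra.TensorProduct.lmul' A₁ (S := B₁)).toRingHom,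
    (envelopingMap A (A ⧸ Ideal.span {f}) B B₀).toRingHom,
    (envelopingMap A A₁ B B₁).toRingHom]
  have : IsScalarTower A (B ⊗[A] B) B := .of_algHom (Algebra.TensorProduct.lmul' A)
  have : IsScalarTower (A ⧸ Ideal.span {f}) (B₀ ⊗[A ⧸ Ideal.span {f}] B₀) B₀ :=
    .of_algHom (Algebra.TensorProduct.lmul' _)
  have : IsScalarTower A (B ⊗[A] B) (B₀ ⊗[A ⧸ Ideal.span {f}] B₀) :=
    .of_algHom (envelopingMap A _ B B₀)
  have : IsScalarTower A (B ⊗[A] B) (B₁ ⊗[A₁] B₁) := .of_algHom (envelopingMap A A₁ B B₁)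
  have : Algebra.IsPushout A (A ⧸ Ideal.span {f}) (B ⊗[A] B) (B₀ ⊗[A ⧸ Ideal.span {f}] B₀) :=
    isPushout_enveloping
  have : Algebra.IsPushout A A₁ (B ⊗[A] B) (B₁ ⊗[A₁] B₁) := isPushout_enveloping
  exact flat_of_flat_quotient_of_flat_away f (A₁ := A₁)
    (lmul'_comp_envelopingMap (A₁ := A ⧸ Ideal.span {f}) (B₁ := B₀))
    (lmul'_comp_envelopingMap (A₁ := A₁) (B₁ := B₁))

/-- Let A → B be a flat homomorphism of commutative rings and f ∈ A.
If the induced homomorphisms A/fA → B/fB and A_f → B_f are both weakly unramified, then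
A → B is weakly unramified. -/
theorem stmt_4 (A B : Type) [CommRing A] [CommRing B] [Algebra A B]
    (hflat : Module.Flat A B) (f : A)
    (h1 :
      letI : Algebra (A ⧸ Ideal.span {f}) (B ⧸ Ideal.span {algebraMap A B f}) :=
        (Ideal.Quotient.lift (Ideal.span {f})
          ((Ideal.Quotient.mk (Ideal.span {algebraMap A B f})).comp (algebraMap A B))
          (fun a ha => by
            rw [RingHom.comp_apply, Ideal.Quotient.eq_zero_iff_mem]
            exact Ideal.mem_span_singleton.mpr
              (map_dvd (algebraMap A B) (Ideal.mem_span_singleton.mp ha)))).toAlgebra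
      WeaklyUnramified (A ⧸ Ideal.span {f}) (B ⧸ Ideal.span {algebraMap A B f}))
    (h2 :
      letI : Algebra (Localization.Away f) (Localization.Away (algebraMap A B f)) :=
        (IsLocalization.Away.map (Localization.Away f)
          (Localization.Away (algebraMap A B f)) (algebraMap A B) f).toAlgebra
      WeaklyUnramified (Localization.Away f) (Localization.Away (algebraMap A B f))) :
    WeaklyUnramified A B := by
  let : Algebra (A ⧸ Ideal.span {f}) (B ⧸ Ideal.span {algebraMap A B f}) :=
    (Ideal.Quotient.lift _ ((Ideal.Quotient.mk _).comp (algebraMap A B)) fun a ha ↦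
      Ideal.Quotient.eq_zero_iff_mem.2 (Ideal.mem_span_singleton.2
        (map_dvd (algebraMap A B) (Ideal.mem_span_singleton.1 ha)))).toAlgebra
  let : Algebra (Localization.Away f) (Localization.Away (algebraMap A B f)) :=
    (IsLocalization.Away.map _ _ (algebraMap A B) f).toAlgebra
  have : IsScalarTower A (A ⧸ Ideal.span {f}) (B ⧸ Ideal.span {algebraMap A B f}) :=
    .of_algebraMap_eq fun _ ↦ rfl
  have : IsScalarTower A (Localization.Away f) (Localization.Away (algebraMap A B f)) :=
    .of_algebraMap_eq' (IsLocalization.map_comp (M := Submonoid.powers f)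
      (T := Submonoid.powers (algebraMap A B f))
      (Submonoid.powers_le.2 (Submonoid.mem_powers _))).symm
  have : Algebra.IsPushout A (A ⧸ Ideal.span {f}) B (B ⧸ Ideal.span {algebraMap A B f}) :=
    isPushout_quotient _ Ideal.Quotient.mk_surjective
      (by rw [Ideal.Quotient.algebraMap_eq, Ideal.mk_ker, Ideal.map_span, Set.image_singleton])
  have : Algebra.IsPushout A (Localization.Away f) B (Localization.Away (algebraMap A B f)) :=
    isPushout_away f
  exact flat_lmul'_of_flat_quotient_of_flat_away f h1 h2
end

section
/- Let A → B be a homomorphism of commutative rings making B a finitely generated A-module, and let f ∈ A. Call a ring homomorphism A → B unramified if B is projective as a module over B ⊗_A B (via the multiplication map). If A/fA → B/fB and A_f → B_f are both unramified (i.e. B/fB is projective as a (B/fB) ⊗_{A/fA} (B/fB)-module, and B_f is projective as a B_f ⊗_{A_f} B_f-module), then A → B is unramified, i.e. B is projective as a B ⊗_A B-module. -/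
/-- A ring homomorphism A → B of commutative rings is *unramified* if B is projective as a
module over B ⊗_A B, the module structure being given by the multiplication map
μ : B ⊗_A B → B. -/
def MulUnramified (A B : Type) [CommRing A] [CommRing B] [Algebra A B] : Prop :=
  letI : Module (TensorProduct A B B) B :=
    ((Algebra.TensorProduct.lmul' A (S := B)).toRingHom).toModule
  Module.Projective (TensorProduct A B B) B

/-!
`B` is projective over `B ⊗[A] B` exactly when the kernel `I` of multiplication is generated by an
idempotent. This forces `I = I²`, i.e. `Ω[B⁄A] = I/I² = 0`, and conversely when `I` is finitely
generated, as it is for `B` essentially of finite type over `A`. Forming `Ω[B⁄A]` commutes with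
passing to `B/fB` (because `d(f b) = f db`) and to `B_f`, so the hypotheses say that the support of
the finite `B`-module `Ω[B⁄A]` meets neither `V(f)` nor `D(f)`; hence `Ω[B⁄A] = 0`.
-/

open scoped TensorProduct

section ProjectiveCyclic

variable {R S : Type*} [CommRing R] [CommRing S] [Algebra R S]

theorem exists_isIdempotentElem_ker_algebraMap_eq_span_of_projective [Module.Projective R S]
    (hsurj : Function.Surjective (algebraMap R S)) :
    ∃ e : R, IsIdempotentElem e ∧ RingHom.ker (algebraMap R S) = Ideal.span {e} := by
  obtain ⟨σ, hσ⟩ := Module.projective_lifting_property (Algebra.linearMap R S) LinearMap.id hsurj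
  have algebraMap_section_one : algebraMap R S (σ 1) = 1 := LinearMap.congr_fun hσ 1
  have one_sub_mem_ker : 1 - σ 1 ∈ RingHom.ker (algebraMap R S) := by
    rw [RingHom.mem_ker, map_sub, map_one, algebraMap_section_one, sub_self]
  have mul_one_sub_of_mem_ker {x : R} (hx : x ∈ RingHom.ker (algebraMap R S)) :
      x * (1 - σ 1) = x := by
    have mul_section_one : x * σ 1 = 0 := by
      rw [← smul_eq_mul, ← map_smul, Algebra.smul_def, RingHom.mem_ker.mp hx, zero_mul, map_zero]
    rw [mul_sub, mul_one, mul_section_one, sub_zero]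
  refine ⟨1 - σ 1, mul_one_sub_of_mem_ker one_sub_mem_ker, le_antisymm (fun x hx => ?_) ?_⟩
  · exact Ideal.mem_span_singleton'.mpr ⟨x, mul_one_sub_of_mem_ker hx⟩
  · exact (Ideal.span_singleton_le_iff_mem _).mpr one_sub_mem_ker

theorem projective_of_ker_algebraMap_eq_span_isIdempotentElem
    (hsurj : Function.Surjective (algebraMap R S)) {e : R} (he : IsIdempotentElem e)
    (hker : RingHom.ker (algebraMap R S) = Ideal.span {e}) : Module.Projective R S := by
  let π := Algebra.linearMap R S
  have mem_ker_iff {x : R} : x ∈ LinearMap.ker π ↔ e ∣ x := by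
    rw [← Ideal.mem_span_singleton, ← hker]
    rfl
  have ker_le : LinearMap.ker π ≤ LinearMap.ker (LinearMap.mulRight R (1 - e)) := by
    intro x hx
    obtain ⟨y, rfl⟩ := mem_ker_iff.mp hx
    rw [LinearMap.mem_ker, LinearMap.mulRight_apply, mul_right_comm, he.mul_one_sub_self, zero_mul]
  have split : (LinearMap.ker π).mkQ ∘ₗ (LinearMap.ker π).liftQ _ ker_le = LinearMap.id := by
    ext
    refine (Submodule.Quotient.eq _).mpr (mem_ker_iff.mpr ⟨-1, ?_⟩)
    change 1 * (1 - e) - 1 = e * -1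
    ring
  have : Module.Projective R (R ⧸ LinearMap.ker π) := .of_split _ _ split
  exact .of_equiv (π.quotKerEquivOfSurjective hsurj)

theorem projective_iff_exists_isIdempotentElem_ker_algebraMap_eq_span
    (hsurj : Function.Surjective (algebraMap R S)) :
    Module.Projective R S ↔
      ∃ e : R, IsIdempotentElem e ∧ RingHom.ker (algebraMap R S) = Ideal.span {e} :=
  ⟨fun _ => exists_isIdempotentElem_ker_algebraMap_eq_span_of_projective hsurj,
    fun ⟨_, he, hker⟩ => projective_of_ker_algebraMap_eq_span_isIdempotentElem hsurj he hker⟩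

end ProjectiveCyclic

theorem formallyUnramified_iff_isIdempotentElem_ideal {A B : Type*} [CommRing A] [CommRing B]
    [Algebra A B] :
    Algebra.FormallyUnramified A B ↔ IsIdempotentElem (KaehlerDifferential.ideal A B) := by
  rw [Algebra.formallyUnramified_iff, KaehlerDifferential, Ideal.cotangent_subsingleton_iff]

section MulUnramified

variable {A B : Type} [CommRing A] [CommRing B] [Algebra A B]

theorem mulUnramified_iff_exists_isIdempotentElem :
    MulUnramified A B ↔
      ∃ e : B ⊗[A] B, IsIdempotentElem e ∧ KaehlerDifferential.ideal A B = Ideal.span {e} := by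
  let : Algebra (B ⊗[A] B) B := (Algebra.TensorProduct.lmul' A (S := B)).toRingHom.toAlgebra
  exact projective_iff_exists_isIdempotentElem_ker_algebraMap_eq_span fun b =>
    ⟨b ⊗ₜ 1, (Algebra.TensorProduct.lmul'_apply_tmul b 1).trans (mul_one b)⟩

theorem MulUnramified.formallyUnramified (h : MulUnramified A B) :
    Algebra.FormallyUnramified A B := by
  obtain ⟨e, he, ideal_eq⟩ := mulUnramified_iff_exists_isIdempotentElem.mp h
  rw [formallyUnramified_iff_isIdempotentElem_ideal, IsIdempotentElem, ideal_eq,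
    Ideal.span_singleton_mul_span_singleton, he.eq]

theorem mulUnramified_of_formallyUnramified [Algebra.EssFiniteType A B]
    [Algebra.FormallyUnramified A B] : MulUnramified A B :=
  mulUnramified_iff_exists_isIdempotentElem.mpr <|
    (Ideal.isIdempotentElem_iff_of_fg _ (KaehlerDifferential.ideal_fg A B)).mp <|
      formallyUnramified_iff_isIdempotentElem_ideal.mp inferInstance

end MulUnramified

section ExtendedIdeal

variable {A B : Type*} [CommRing A] [CommRing B] [Algebra A B] (I : Ideal A)

theorem one_tmul_D_eq_zero_of_mem_map {b : B} (hb : b ∈ I.map (algebraMap A B)) :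
    (1 : B ⧸ I.map (algebraMap A B)) ⊗ₜ[B] KaehlerDifferential.D A B b = 0 := by
  induction hb using Submodule.span_induction with
  | mem _ hx =>
    obtain ⟨a, -, rfl⟩ := hx
    rw [Derivation.map_algebraMap, TensorProduct.tmul_zero]
  | zero => rw [map_zero, TensorProduct.tmul_zero]
  | add x y _ _ hx hy => rw [map_add, TensorProduct.tmul_add, hx, hy, add_zero]
  | smul c x hx_mem hx =>
    have smul_one_eq_zero : x • (1 : B ⧸ I.map (algebraMap A B)) = 0 := by
      rw [Algebra.smul_def, mul_one]
      exact Ideal.Quotient.eq_zero_iff_mem.mpr hx_mem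
    rw [smul_eq_mul, Derivation.leibniz, TensorProduct.tmul_add, TensorProduct.tmul_smul, hx,
      smul_zero, zero_add, ← TensorProduct.smul_tmul, smul_one_eq_zero, TensorProduct.zero_tmul]

theorem kerCotangentToTensor_quotient_map_eq_zero :
    KaehlerDifferential.kerCotangentToTensor A B (B ⧸ I.map (algebraMap A B)) = 0 := by
  ext x
  obtain ⟨⟨b, hb⟩, rfl⟩ := Ideal.toCotangent_surjective _ x
  rw [Ideal.Quotient.algebraMap_eq, Ideal.mk_ker] at hb
  exact one_tmul_D_eq_zero_of_mem_map I hb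

theorem mapBaseChange_quotient_map_injective :
    Function.Injective
      (KaehlerDifferential.mapBaseChange A B (B ⧸ I.map (algebraMap A B))) := by
  have exact_conormal := KaehlerDifferential.exact_kerCotangentToTensor_mapBaseChange A B
    (B ⧸ I.map (algebraMap A B)) Ideal.Quotient.mk_surjective
  refine (injective_iff_map_eq_zero _).mpr fun x hx => ?_
  obtain ⟨y, rfl⟩ := (exact_conormal x).mp hx
  rw [kerCotangentToTensor_quotient_map_eq_zero, LinearMap.zero_apply]

theorem zeroLocus_map_subset_unramifiedLocus [Algebra.EssFiniteType A B]
    [Algebra.FormallyUnramified A (B ⧸ I.map (algebraMap A B))] :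
    PrimeSpectrum.zeroLocus (I.map (algebraMap A B) : Set B) ⊆ Algebra.unramifiedLocus A B := by
  have : Subsingleton ((B ⧸ I.map (algebraMap A B)) ⊗[B] Ω[B⁄A]) :=
    (mapBaseChange_quotient_map_injective I).subsingleton
  have : Subsingleton (Ω[B⁄A] ⧸ (I.map (algebraMap A B) • ⊤ : Submodule B Ω[B⁄A])) :=
    (TensorProduct.quotTensorEquivQuotSMul _ _).symm.injective.subsingleton
  have support_inter_zeroLocus_eq_empty :=
    (Module.support_quotient (I.map (algebraMap A B))).symm.trans
      (Module.support_eq_empty (R := B)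
        (M := Ω[B⁄A] ⧸ (I.map (algebraMap A B) • ⊤ : Submodule B Ω[B⁄A])))
  rw [Algebra.unramifiedLocus_eq_compl_support]
  exact (Set.disjoint_iff_inter_eq_empty.mpr support_inter_zeroLocus_eq_empty).subset_compl_left

end ExtendedIdeal

theorem formallyUnramified_of_quotient_of_away {A B : Type*} [CommRing A] [CommRing B]
    [Algebra A B] [Algebra.EssFiniteType A B] (f : A)
    [Algebra.FormallyUnramified A (B ⧸ Ideal.span {algebraMap A B f})]
    [Algebra.FormallyUnramified A (Localization.Away (algebraMap A B f))] :
    Algebra.FormallyUnramified A B := by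
  have map_span : (Ideal.span {f}).map (algebraMap A B) = Ideal.span {algebraMap A B f} := by
    rw [Ideal.map_span, Set.image_singleton]
  have : Algebra.FormallyUnramified A (B ⧸ (Ideal.span {f}).map (algebraMap A B)) := by
    rwa [map_span]
  rw [← Algebra.unramifiedLocus_eq_univ_iff, Set.eq_univ_iff_forall]
  intro p
  by_cases hp : algebraMap A B f ∈ p.asIdeal
  · refine zeroLocus_map_subset_unramifiedLocus (Ideal.span {f}) ?_
    rwa [map_span, PrimeSpectrum.zeroLocus_span, PrimeSpectrum.mem_zeroLocus,
      Set.singleton_subset_iff]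
  · exact Algebra.basicOpen_subset_unramifiedLocus_iff.mpr inferInstance hp

theorem stmt_5_general (A B : Type) [CommRing A] [CommRing B] [Algebra A B]
    [Algebra.EssFiniteType A B] (f : A)
    (φ : A ⧸ Ideal.span {f} →+* B ⧸ Ideal.span {algebraMap A B f})
    (hφ : φ.comp (algebraMap A _) = algebraMap A _)
    (ψ : Localization.Away f →+* Localization.Away (algebraMap A B f))
    (hψ : ψ.comp (algebraMap A _) = algebraMap A _)
    (hquot : letI := φ.toAlgebra
      MulUnramified (A ⧸ Ideal.span {f}) (B ⧸ Ideal.span {algebraMap A B f}))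
    (haway : letI := ψ.toAlgebra
      MulUnramified (Localization.Away f) (Localization.Away (algebraMap A B f))) :
    MulUnramified A B := by
  let := φ.toAlgebra
  let := ψ.toAlgebra
  have := IsScalarTower.of_algebraMap_eq' hφ.symm
  have := IsScalarTower.of_algebraMap_eq' hψ.symm
  have := hquot.formallyUnramified
  have := haway.formallyUnramified
  have : Algebra.FormallyUnramified A (B ⧸ Ideal.span {algebraMap A B f}) :=
    .comp A (A ⧸ Ideal.span {f}) _
  have : Algebra.FormallyUnramified A (Localization.Away (algebraMap A B f)) :=
    .comp A (Localization.Away f) _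
  have := formallyUnramified_of_quotient_of_away (B := B) f
  exact mulUnramified_of_formallyUnramified

/-- Let A → B be a homomorphism of commutative rings making B a finitely
generated A-module, and f ∈ A. If the induced homomorphisms A/fA → B/fB and A_f → B_f are
both unramified, then A → B is unramified. -/
theorem stmt_5 (A B : Type) [CommRing A] [CommRing B] [Algebra A B]
    (hfin : Module.Finite A B) (f : A)
    (h1 :
      letI : Algebra (A ⧸ Ideal.span {f}) (B ⧸ Ideal.span {algebraMap A B f}) :=
        (Ideal.Quotient.lift (Ideal.span {f})
          ((Ideal.Quotient.mk (Ideal.span {algebraMap A B f})).comp (algebraMap A B))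
          (fun a ha => by
            rw [RingHom.comp_apply, Ideal.Quotient.eq_zero_iff_mem]
            exact Ideal.mem_span_singleton.mpr
              (map_dvd (algebraMap A B) (Ideal.mem_span_singleton.mp ha)))).toAlgebra
      MulUnramified (A ⧸ Ideal.span {f}) (B ⧸ Ideal.span {algebraMap A B f}))
    (h2 :
      letI : Algebra (Localization.Away f) (Localization.Away (algebraMap A B f)) :=
        (IsLocalization.Away.map (Localization.Away f)
          (Localization.Away (algebraMap A B f)) (algebraMap A B) f).toAlgebra
      MulUnramified (Localization.Away f) (Localization.Away (algebraMap A B f))) :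
    MulUnramified A B := by
  exact stmt_5_general A B f _ rfl _ (IsLocalization.map_comp _) h1 h2
end

section
/- Let A be a commutative ring and B an unramified A-algebra, with diagonal idempotent e_{B/A} ∈ B ⊗_A B (the unique idempotent satisfying μ_{B/A}(e_{B/A}) = 1 and e_{B/A} · ker(μ_{B/A}) = 0, where μ_{B/A} : B ⊗_A B → B is the multiplication map). Let C be any A-algebra. For an idempotent e ∈ B ⊗_A C, let Γ(e) : C → e·(B ⊗_A C) be the ring homomorphism c ↦ e·(1 ⊗ c) (the target being the ring e·(B ⊗_A C) with identity element e), and let Δ(e) : B → e·(B ⊗_A C) be b ↦ e·(b ⊗ 1). Then the rule φ ↦ e_φ := (id_B ⊗ φ)(e_{B/A}) defines a bijection from the set of A-algebra homomorphisms B → C onto the set of idempotents e ∈ B ⊗_A C for which Γ(e) is bijective; its inverse assigns to such an idempotent e the A-algebra homomorphism f_e := Γ(e)⁻¹ ∘ Δ(e) : B → C. -/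
open TensorProduct

/-!
The idempotent `e_φ` cuts the graph of `Spec φ` out of `Spec (B ⊗ C)`. It is determined by two
conditions: `b ⊗ 1` and `1 ⊗ φ b` agree on it, and `b ⊗ c ↦ φ b * c` sends it to `1`. The first
condition says that its product with any `x` depends only on the image of `x` in `C`, and
everything else follows by choosing suitable `x`. The diagonal idempotent is the graph of the
identity, and graphs are carried to graphs by `id ⊗ ψ`.
-/

/-- `IsGraph φ ε` says that `ε ∈ B ⊗ C` is the idempotent cutting out the graph of `φ : B → C`;
that `ε` is idempotent is `IsGraph.isIdempotentElem`. For `φ = AlgHom.id A B` this is the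
notion of a diagonal (separability) idempotent, phrased without subtraction so that it makes sense
over semirings. -/
structure IsGraph {A B C : Type*} [CommSemiring A] [CommSemiring B] [CommSemiring C]
    [Algebra A B] [Algebra A C] (φ : B →ₐ[A] C) (ε : B ⊗[A] C) : Prop where
  mul_one_tmul : ∀ b : B, ε * (1 ⊗ₜ[A] φ b) = ε * (b ⊗ₜ[A] 1)
  productMap_eq_one : Algebra.TensorProduct.productMap φ (AlgHom.id A C) ε = 1

section CommSemiring

variable {A B C D : Type*} [CommSemiring A] [CommSemiring B] [CommSemiring C] [CommSemiring D]
  [Algebra A B] [Algebra A C] [Algebra A D]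

theorem mul_one_tmul_productMap {φ : B →ₐ[A] C} {ε : B ⊗[A] C}
    (h : ∀ b : B, ε * (1 ⊗ₜ[A] φ b) = ε * (b ⊗ₜ[A] 1)) (x : B ⊗[A] C) :
    ε * (1 ⊗ₜ[A] Algebra.TensorProduct.productMap φ (AlgHom.id A C) x) = ε * x := by
  induction x using TensorProduct.induction_on with
  | zero => simp
  | tmul b c =>
    calc ε * (1 ⊗ₜ[A] Algebra.TensorProduct.productMap φ (AlgHom.id A C) (b ⊗ₜ[A] c))
        = ε * (1 ⊗ₜ[A] φ b) * (1 ⊗ₜ[A] c) := by simp [mul_assoc]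
      _ = ε * (b ⊗ₜ[A] 1) * (1 ⊗ₜ[A] c) := by rw [h b]
      _ = ε * (b ⊗ₜ[A] c) := by simp [mul_assoc]
  | add x y hx hy => simp only [map_add, tmul_add, mul_add, hx, hy]

namespace IsGraph

variable {φ ψ : B →ₐ[A] C} {ε ε' : B ⊗[A] C}

theorem mul_eq_self (hε : IsGraph φ ε) {x : B ⊗[A] C}
    (hx : Algebra.TensorProduct.productMap φ (AlgHom.id A C) x = 1) : ε * x = ε := by
  rw [← mul_one_tmul_productMap hε.mul_one_tmul x, hx, ← Algebra.TensorProduct.one_def, mul_one]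

theorem isIdempotentElem (hε : IsGraph φ ε) : IsIdempotentElem ε :=
  hε.mul_eq_self hε.productMap_eq_one

theorem injective_mul_one_tmul (hε : IsGraph φ ε) :
    Function.Injective fun c : C => ε * ((1 : B) ⊗ₜ[A] c) := by
  refine Function.LeftInverse.injective
    (g := Algebra.TensorProduct.productMap φ (AlgHom.id A C)) fun c => ?_
  simp [hε.productMap_eq_one]

theorem elem_unique (hε : IsGraph φ ε) (hε' : IsGraph φ ε') : ε = ε' :=
  calc ε = ε * ε' := (hε.mul_eq_self hε'.productMap_eq_one).symm
    _ = ε' * ε := mul_comm ε ε'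
    _ = ε' := hε'.mul_eq_self hε.productMap_eq_one

theorem hom_unique (hφ : IsGraph φ ε) (hψ : IsGraph ψ ε) : φ = ψ :=
  AlgHom.ext fun b =>
    hφ.injective_mul_one_tmul ((hφ.mul_one_tmul b).trans (hψ.mul_one_tmul b).symm)

theorem map (hε : IsGraph φ ε) (χ : C →ₐ[A] D) :
    IsGraph (χ.comp φ) (Algebra.TensorProduct.map (AlgHom.id A B) χ ε) where
  mul_one_tmul b := by
    simpa using congrArg (Algebra.TensorProduct.map (AlgHom.id A B) χ) (hε.mul_one_tmul b)
  productMap_eq_one := by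
    have productMap_comp_map :
        (Algebra.TensorProduct.productMap (χ.comp φ) (AlgHom.id A D)).comp
            (Algebra.TensorProduct.map (AlgHom.id A B) χ)
          = χ.comp (Algebra.TensorProduct.productMap φ (AlgHom.id A C)) := by
      ext <;> simp
    simpa [hε.productMap_eq_one] using DFunLike.congr_fun productMap_comp_map ε

end IsGraph

theorem exists_algHom_mul_one_tmul {ε : B ⊗[A] C}
    (hinj : Function.Injective fun c : C => ε * ((1 : B) ⊗ₜ[A] c))
    (hsurj : ∀ b : B, ∃ c : C, ε * ((1 : B) ⊗ₜ[A] c) = ε * (b ⊗ₜ[A] 1)) :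
    ∃ φ : B →ₐ[A] C, ∀ b : B, ε * (1 ⊗ₜ[A] φ b) = ε * (b ⊗ₜ[A] 1) := by
  choose f hf using hsurj
  have f_eq {b : B} {c : C} (h : ε * (b ⊗ₜ[A] 1) = ε * (1 ⊗ₜ[A] c)) : f b = c :=
    hinj ((hf b).trans h)
  have f_mul (x y : B) : f (x * y) = f x * f y := f_eq <|
    calc ε * ((x * y) ⊗ₜ[A] 1)
        = ε * (x ⊗ₜ[A] 1) * (y ⊗ₜ[A] 1) := by simp [mul_assoc]
      _ = ε * (y ⊗ₜ[A] 1) * (1 ⊗ₜ[A] f x) := by rw [← hf x, mul_right_comm]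
      _ = ε * (1 ⊗ₜ[A] f x) * (1 ⊗ₜ[A] f y) := by rw [← hf y, mul_right_comm]
      _ = ε * (1 ⊗ₜ[A] (f x * f y)) := by simp [mul_assoc]
  let fLinear : B →ₗ[A] C :=
    { toFun := f
      map_add' := fun x y => f_eq (by rw [add_tmul, tmul_add, mul_add, mul_add, hf, hf])
      map_smul' := fun a x => f_eq (by
        rw [RingHom.id_apply, ← smul_tmul', tmul_smul, mul_smul_comm, mul_smul_comm, hf]) }
  exact ⟨AlgHom.ofLinearMap fLinear (f_eq rfl) f_mul, hf⟩

theorem exists_isGraph_iff {ε : B ⊗[A] C} :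
    (∃ φ : B →ₐ[A] C, IsGraph φ ε) ↔
      IsIdempotentElem ε ∧
      Function.Injective (fun c : C => ε * ((1 : B) ⊗ₜ[A] c)) ∧
      ∀ x : B ⊗[A] C, ∃ c : C, ε * ((1 : B) ⊗ₜ[A] c) = ε * x := by
  constructor
  · rintro ⟨φ, hε⟩
    exact ⟨hε.isIdempotentElem, hε.injective_mul_one_tmul,
      fun x => ⟨_, mul_one_tmul_productMap hε.mul_one_tmul x⟩⟩
  · rintro ⟨hidem, hinj, hsurj⟩
    obtain ⟨φ, hφ⟩ := exists_algHom_mul_one_tmul hinj fun b => hsurj (b ⊗ₜ[A] 1)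
    refine ⟨φ, hφ, hinj ?_⟩
    calc ε * (1 ⊗ₜ[A] Algebra.TensorProduct.productMap φ (AlgHom.id A C) ε)
        = ε * ε := mul_one_tmul_productMap hφ ε
      _ = ε * (1 ⊗ₜ[A] 1) := by rw [hidem.eq, ← Algebra.TensorProduct.one_def, mul_one]

theorem stmt_6_general {e : B ⊗[A] B} (he : IsGraph (AlgHom.id A B) e) :
    (Set.BijOn
        (fun φ : B →ₐ[A] C => Algebra.TensorProduct.map (AlgHom.id A B) φ e)
        Set.univ
        { ε : B ⊗[A] C |
            IsIdempotentElem ε ∧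
            Function.Injective (fun c : C => ε * ((1 : B) ⊗ₜ[A] c)) ∧
            ∀ x : B ⊗[A] C, ∃ c : C, ε * ((1 : B) ⊗ₜ[A] c) = ε * x })
    ∧ ∀ (φ : B →ₐ[A] C) (b : B),
        (Algebra.TensorProduct.map (AlgHom.id A B) φ e) * ((1 : B) ⊗ₜ[A] φ b)
          = (Algebra.TensorProduct.map (AlgHom.id A B) φ e) * (b ⊗ₜ[A] (1 : C)) := by
  have isGraph_map (φ : B →ₐ[A] C) :
      IsGraph φ (Algebra.TensorProduct.map (AlgHom.id A B) φ e) := he.map φ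
  refine ⟨⟨?mapsTo, ?injOn, ?surjOn⟩, fun φ => (isGraph_map φ).mul_one_tmul⟩
  case mapsTo => exact fun φ _ => exists_isGraph_iff.mp ⟨φ, isGraph_map φ⟩
  case injOn =>
    intro φ _ ψ _ hφψ
    exact (isGraph_map φ).hom_unique ((congrArg (IsGraph ψ) hφψ).mpr (isGraph_map ψ))
  case surjOn =>
    intro ε hε
    obtain ⟨φ, hφ⟩ := exists_isGraph_iff.mpr hε
    exact ⟨φ, Set.mem_univ φ, (isGraph_map φ).elem_unique hφ⟩

end CommSemiring

theorem isGraph_id_of_mul_ker_eq_zero {A B : Type*} [CommSemiring A] [CommRing B] [Algebra A B]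
    {e : B ⊗[A] B} (hμ : LinearMap.mul' A B e = 1)
    (hker : ∀ x : B ⊗[A] B, LinearMap.mul' A B x = 0 → e * x = 0) :
    IsGraph (AlgHom.id A B) e where
  mul_one_tmul b := by
    have hdiff : e * (1 ⊗ₜ[A] b - b ⊗ₜ[A] 1) = 0 := hker _ (by simp)
    rwa [mul_sub, sub_eq_zero] at hdiff
  productMap_eq_one := by
    have productMap_id :
        Algebra.TensorProduct.productMap (AlgHom.id A B) (AlgHom.id A B)
          = Algebra.TensorProduct.lmul' A := by
      ext <;> simp
    rw [productMap_id]
    exact hμ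

/-- Let B be an unramified A-algebra with diagonal idempotent
e = e_{B/A} ∈ B ⊗_A B (the unique idempotent with μ(e) = 1 and e·ker μ = 0, where
μ : B ⊗_A B → B is the multiplication map), and let C be any A-algebra. For an idempotent
ε ∈ B ⊗_A C, the map Γ(ε) : C → ε·(B ⊗_A C) is c ↦ ε·(1 ⊗ c), and Δ(ε) : B → ε·(B ⊗_A C) is
b ↦ ε·(b ⊗ 1). Then φ ↦ e_φ := (id_B ⊗ φ)(e) is a bijection from A-algebra homomorphisms
B → C onto the set of idempotents ε ∈ B ⊗_A C for which Γ(ε) is bijective (injective into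
B ⊗_A C and surjective onto ε·(B ⊗_A C)); moreover for every φ one has
Γ(e_φ) ∘ φ = Δ(e_φ), i.e. the inverse bijection is ε ↦ f_ε := Γ(ε)⁻¹ ∘ Δ(ε). -/
theorem stmt_6 (A B C : Type) [CommRing A] [CommRing B] [CommRing C]
    [Algebra A B] [Algebra A C]
    (e : TensorProduct A B B) (he : IsIdempotentElem e)
    (hμ : LinearMap.mul' A B e = 1)
    (hker : ∀ x : TensorProduct A B B, LinearMap.mul' A B x = 0 → e * x = 0) :
    (Set.BijOn
        (fun φ : B →ₐ[A] C => Algebra.TensorProduct.map (AlgHom.id A B) φ e)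
        Set.univ
        { ε : TensorProduct A B C |
            IsIdempotentElem ε ∧
            Function.Injective (fun c : C => ε * ((1 : B) ⊗ₜ[A] c)) ∧
            ∀ x : TensorProduct A B C, ∃ c : C, ε * ((1 : B) ⊗ₜ[A] c) = ε * x })
    ∧ ∀ (φ : B →ₐ[A] C) (b : B),
        (Algebra.TensorProduct.map (AlgHom.id A B) φ e) * ((1 : B) ⊗ₜ[A] φ b)
          = (Algebra.TensorProduct.map (AlgHom.id A B) φ e) * (b ⊗ₜ[A] (1 : C)) := by
  exact stmt_6_general (isGraph_id_of_mul_ker_eq_zero hμ hker)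
end

section
/- Let (A_n ; φ_n : A_{n+1} → A_n)_{n∈ℕ} be an inverse system of commutative rings such that: (a) each φ_n is surjective, and (b) ker(φ_n) = K_{n+1}^{n+1}, where K_{n+1} := ker(A_{n+1} → A₀) is the kernel of the composite transition map φ₀ ∘ ⋯ ∘ φ_n. Let A_∞ := lim_n A_n and I := ker(A_∞ → A₀). Then for every n ∈ ℕ, the kernel of the projection A_∞ → A_n equals the closure of I^{n+1} in the projective-limit topology, i.e. ker(A_∞ → A_n) = ⋂_{m∈ℕ} ( I^{n+1} + ker(A_∞ → A_m) ). -/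
set_option synthInstance.maxHeartbeats 800000
set_option maxHeartbeats 1600000

/-- The inverse limit lim_n A_n of an inverse system of commutative rings, realized as the
subring of the product consisting of the compatible sequences. -/
def invLim (A : ℕ → Type) [∀ n, CommRing (A n)] (φ : ∀ n, A (n + 1) →+* A n) :
    Subring (∀ n, A n) where
  carrier := { x | ∀ n, φ n (x (n + 1)) = x n }
  zero_mem' := fun n => by simp
  one_mem' := fun n => by simp
  add_mem' := fun {x y} hx hy n => by simp [hx n, hy n]
  mul_mem' := fun {x y} hx hy n => by simp [hx n, hy n]
  neg_mem' := fun {x} hx n => by simp [hx n]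

/-- The composite transition map A_n →+* A_0 of an inverse system, i.e. φ₀ ∘ ⋯ ∘ φ_{n-1}. -/
def toZero (A : ℕ → Type) [∀ n, CommRing (A n)] (φ : ∀ n, A (n + 1) →+* A n) :
    ∀ n, A n →+* A 0
  | 0 => RingHom.id (A 0)
  | (n + 1) => (toZero A φ n).comp (φ n)

/-- The projection A_∞ →+* A_n from the inverse limit. -/
def invLimProj (A : ℕ → Type) [∀ n, CommRing (A n)] (φ : ∀ n, A (n + 1) →+* A n) (n : ℕ) :
    invLim A φ →+* A n :=
  (Pi.evalRingHom A n).comp (invLim A φ).subtype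

/-!
Write `Kₘ` for the kernel of `A_∞ → Aₘ`, so that `I = K₀`. Surjectivity of the transition maps makes
every projection of the limit surjective, so pulling `ker φₘ = (ker (Aₘ₊₁ → A₀)) ^ (m + 1)` back
along `A_∞ → Aₘ₊₁` gives `Kₘ = I ^ (m + 1) + Kₘ₊₁`. As the powers of `I` decrease, iterating yields
`Kₙ = I ^ (n + 1) + Kₘ` for all `m ≥ n`, while for `m ≤ n` the right-hand side contains `Kₙ`.
-/

section Order

variable {α : Type*} {p k : ℕ → α}

theorem eq_sup_of_le_of_forall_eq_sup_succ [SemilatticeSup α] (hp : Antitone p)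
    (hk : ∀ m, k m = p m ⊔ k (m + 1)) {n m : ℕ} (hnm : n ≤ m) : k n = p n ⊔ k m := by
  induction m, hnm using Nat.le_induction with
  | base => exact (sup_eq_right.2 ((hk n).symm ▸ le_sup_left)).symm
  | succ m hnm ih => rw [ih, hk m, ← sup_assoc, sup_eq_left.2 (hp hnm)]

theorem eq_iInf_sup_of_forall_eq_sup_succ [CompleteLattice α] (hp : Antitone p)
    (hk : ∀ m, k m = p m ⊔ k (m + 1)) (n : ℕ) : k n = ⨅ m, p n ⊔ k m := by
  have hanti : Antitone k := antitone_nat_of_succ_le fun m => (hk m).symm ▸ le_sup_right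
  have hsup {m : ℕ} (hnm : n ≤ m) : k n = p n ⊔ k m :=
    eq_sup_of_le_of_forall_eq_sup_succ hp hk hnm
  refine le_antisymm (le_iInf fun m => ?_) ((iInf_le _ n).trans (hsup le_rfl).ge)
  rcases le_total n m with hnm | hmn
  · exact (hsup hnm).le
  · exact (hanti hmn).trans le_sup_right

end Order

theorem comap_pow_eq_sup_ker {R S : Type*} [CommRing R] [CommRing S] {f : R →+* S}
    (hf : Function.Surjective f) (J : Ideal S) (n : ℕ) :
    (J ^ n).comap f = J.comap f ^ n ⊔ RingHom.ker f := by
  rw [← Ideal.comap_map_of_surjective' f hf, Ideal.map_pow, Ideal.map_comap_of_surjective f hf]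

-- The induction drops the first term of the system, which reduces the claim to the case `m = 0`.
theorem exists_compatible_seq_apply_eq {X : ℕ → Type*} {f : ∀ n, X (n + 1) → X n}
    (hf : ∀ n, Function.Surjective (f n)) (m : ℕ) (a : X m) :
    ∃ x : ∀ n, X n, (∀ n, f n (x (n + 1)) = x n) ∧ x m = a := by
  induction m generalizing X with
  | zero =>
    exact ⟨Nat.rec a fun n => Function.surjInv (hf n),
      fun n => Function.surjInv_eq (hf n) _, rfl⟩
  | succ m ih =>
    obtain ⟨y, hy, hya⟩ := ih (fun n => hf (n + 1)) a
    refine ⟨Nat.rec (f 0 (y 0)) fun n _ => y n, ?_, hya⟩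
    rintro (_ | n)
    · rfl
    · exact hy n

section InverseLimit

variable {A : ℕ → Type} [∀ n, CommRing (A n)] {φ : ∀ n, A (n + 1) →+* A n}

theorem invLimProj_surjective (hsurj : ∀ n, Function.Surjective (φ n)) (m : ℕ) :
    Function.Surjective (invLimProj A φ m) := fun a =>
  let ⟨x, hx, hxa⟩ := exists_compatible_seq_apply_eq hsurj m a
  ⟨⟨x, hx⟩, hxa⟩

theorem comp_invLimProj_succ (m : ℕ) :
    (φ m).comp (invLimProj A φ (m + 1)) = invLimProj A φ m :=
  RingHom.ext fun x => x.2 m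

theorem toZero_comp_invLimProj (m : ℕ) :
    (toZero A φ m).comp (invLimProj A φ m) = invLimProj A φ 0 := by
  induction m with
  | zero => rfl
  | succ m ih => rw [toZero, RingHom.comp_assoc, comp_invLimProj_succ, ih]

theorem ker_invLimProj_eq_pow_sup_ker_succ (hsurj : ∀ n, Function.Surjective (φ n)) {m e : ℕ}
    (hker : RingHom.ker (φ m) = RingHom.ker (toZero A φ (m + 1)) ^ e) :
    RingHom.ker (invLimProj A φ m) =
      RingHom.ker (invLimProj A φ 0) ^ e ⊔ RingHom.ker (invLimProj A φ (m + 1)) :=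
  calc
    RingHom.ker (invLimProj A φ m)
      = (RingHom.ker (φ m)).comap (invLimProj A φ (m + 1)) := by
        rw [RingHom.comap_ker, comp_invLimProj_succ]
    _ = (RingHom.ker (toZero A φ (m + 1)) ^ e).comap (invLimProj A φ (m + 1)) := by rw [hker]
    _ = (RingHom.ker (toZero A φ (m + 1))).comap (invLimProj A φ (m + 1)) ^ e ⊔
          RingHom.ker (invLimProj A φ (m + 1)) :=
        comap_pow_eq_sup_ker (invLimProj_surjective hsurj (m + 1)) _ e
    _ = RingHom.ker (invLimProj A φ 0) ^ e ⊔ RingHom.ker (invLimProj A φ (m + 1)) := by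
        rw [RingHom.comap_ker, toZero_comp_invLimProj]

end InverseLimit

/-- Let (A_n; φ_n : A_{n+1} → A_n) be an inverse system of commutative rings
with (a) each φ_n surjective and (b) ker(φ_n) = K_{n+1}^{n+1} where K_{n+1} is the kernel of
the composite A_{n+1} → A₀. Let A_∞ := lim_n A_n and I := ker(A_∞ → A₀). Then for every n,
the kernel of A_∞ → A_n equals the closure of I^{n+1} in the projective-limit topology, i.e.
ker(A_∞ → A_n) = ⋂_m ( I^{n+1} + ker(A_∞ → A_m) ). -/
theorem stmt_8 (A : ℕ → Type) [∀ n, CommRing (A n)] (φ : ∀ n, A (n + 1) →+* A n)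
    (hsurj : ∀ n, Function.Surjective (φ n))
    (hker : ∀ n, RingHom.ker (φ n) = (RingHom.ker (toZero A φ (n + 1))) ^ (n + 1)) :
    ∀ n : ℕ,
      RingHom.ker (invLimProj A φ n)
        = ⨅ m : ℕ, (RingHom.ker (invLimProj A φ 0)) ^ (n + 1) ⊔ RingHom.ker (invLimProj A φ m) := by
  have hpow : Antitone fun n => RingHom.ker (invLimProj A φ 0) ^ (n + 1) := fun _ _ hmn =>
    Ideal.pow_le_pow_right (Nat.succ_le_succ hmn)
  exact eq_iInf_sup_of_forall_eq_sup_succ hpow fun m =>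
    ker_invLimProj_eq_pow_sup_ker_succ hsurj (hker m)
end

section
/- Let B be a commutative ring and g₁, …, g_k ∈ B. Then the ideal generated by g₁, …, g_k equals B (i.e. Σᵢ gᵢB = B) if and only if the natural ring homomorphism B → ∏ᵢ₌₁ᵏ B_{gᵢ} into the product of the localizations at the powers of the gᵢ is faithfully flat. -/
/-!
For a finite family of flat `R`-algebras `A i`, the product `∏ A i` is flat, and its spectrum is
the disjoint union of the `Spec (A i)`; hence it is faithfully flat exactly when the images of the
`Spec (A i)` cover `Spec R`. For `A i = R_{g i}` these images are the basic opens `D(g i)`, which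
cover `Spec R` exactly when the `g i` generate the unit ideal.
-/

open PrimeSpectrum

section

variable {R ι : Type*} [Finite ι]

theorem flat_pi [CommSemiring R] (M : ι → Type*) [∀ i, AddCommMonoid (M i)]
    [∀ i, Module R (M i)] [∀ i, Module.Flat R (M i)] : Module.Flat R (∀ i, M i) := by
  classical
  have := Fintype.ofFinite ι
  exact .of_linearEquiv (DirectSum.linearEquivFunOnFintype R ι M).symm

variable [CommRing R]

theorem faithfullyFlat_pi_iff_iUnion_range_comap (A : ι → Type*) [∀ i, CommRing (A i)]
    [∀ i, Algebra R (A i)] [∀ i, Module.Flat R (A i)] :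
    Module.FaithfullyFlat R (∀ i, A i) ↔
      ⋃ i, Set.range (comap (algebraMap R (A i))) = Set.univ := by
  have : Module.Flat R (∀ i, A i) := flat_pi A
  have range_comap : ⋃ i, Set.range (comap (algebraMap R (A i))) =
      Set.range (comap (algebraMap R (∀ i, A i))) :=
    iUnion_range_comap_comp_evalRingHom (algebraMap R (∀ i, A i))
  rw [range_comap, Set.range_eq_univ]
  exact ⟨fun _ ↦ comap_surjective_of_faithfullyFlat, .of_comap_surjective⟩

theorem stmt_9_general (g : ι → R) (A : ι → Type*) [∀ i, CommRing (A i)]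
    [∀ i, Algebra R (A i)] [∀ i, IsLocalization.Away (g i) (A i)] :
    Ideal.span (Set.range g) = ⊤ ↔ Module.FaithfullyFlat R (∀ i, A i) := by
  have (i : ι) : Module.Flat R (A i) := IsLocalization.flat _ (.powers (g i))
  have range_comap (i : ι) : Set.range (comap (algebraMap R (A i))) = basicOpen (g i) :=
    localization_away_comap_range (A i) (g i)
  calc Ideal.span (Set.range g) = ⊤
    _ ↔ ⨆ i, basicOpen (g i) = ⊤ := iSup_basicOpen_eq_top_iff.symm
    _ ↔ ⋃ i, (basicOpen (g i) : Set (PrimeSpectrum R)) = Set.univ := by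
      rw [← TopologicalSpace.Opens.coe_eq_univ, TopologicalSpace.Opens.coe_iSup]
    _ ↔ ⋃ i, Set.range (comap (algebraMap R (A i))) = Set.univ := by simp only [range_comap]
    _ ↔ Module.FaithfullyFlat R (∀ i, A i) := (faithfullyFlat_pi_iff_iUnion_range_comap A).symm

end

/-- Let B be a commutative ring and g₁, …, g_k ∈ B. Then the ideal generated
by the gᵢ equals B if and only if the natural ring homomorphism B → ∏ᵢ B_{gᵢ} into the product
of the localizations at the powers of the gᵢ is faithfully flat (i.e. the product, with its
canonical B-module structure, is a faithfully flat B-module). -/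
theorem stmt_9 (B : Type) [CommRing B] (k : ℕ) (g : Fin k → B) :
    Ideal.span (Set.range g) = ⊤ ↔
      Module.FaithfullyFlat B (∀ i : Fin k, Localization.Away (g i)) :=
  stmt_9_general g fun i ↦ Localization.Away (g i)
end

section
/- Let π : R → R₀ be a surjective homomorphism of commutative rings whose kernel is a nilpotent ideal, and let n ∈ ℕ. Let S, T ∈ M_n(R) be idempotent matrices with images S₀ := π(S), T₀ := π(T) in M_n(R₀), and suppose φ₀, ψ₀ ∈ M_n(R₀) satisfy: φ₀·S₀ = 0 = T₀·φ₀; ψ₀·T₀ = 0 = S₀·ψ₀; and (1−S₀)·(ψ₀·φ₀ − 1) = 0 = (1−T₀)·(φ₀·ψ₀ − 1). Then there exist φ, ψ ∈ M_n(R) with π(φ) = φ₀, π(ψ) = ψ₀, and: φ·S = 0 = T·φ; ψ·T = 0 = S·ψ; (1−S)·(ψ·φ − 1) = 0 = (1−T)·(φ·ψ − 1). (This expresses that the scheme classifying such quadruples (S, T, φ, ψ) is smooth over the product of two copies of the scheme of idempotent matrices.) -/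
/-!
Put `e = 1 - S` and `f = 1 - T`. The identities say that `φ` and `ψ` are mutually inverse
isomorphisms between the idempotents `e` and `f`: `ψ φ = e`, `φ ψ = f`, `φ e = φ`, `ψ f = ψ`.
The reduction `M_n(R) → M_n(R₀)` is surjective and reflects units. Multiplying arbitrary lifts by
`e` and `f` gives `a`, `b` with `a = f a e` and `b = b f`. Then `u = 1 - e + b a` reduces to `1`,
so it is a unit, and replacing `b` by `u⁻¹ b` gives `b a = e`. Now `f - a b` is an idempotent
reducing to `0`, hence it is `0`.
-/

theorem isLocalHom_of_forall_mem_ker_isNilpotent {A B : Type*} [Ring A] [Ring B] {p : A →+* B}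
    (hp : Function.Surjective p) (hker : ∀ x ∈ RingHom.ker p, IsNilpotent x) : IsLocalHom p := by
  have isUnit_of_map_eq_one (x : A) (hx : p x = 1) : IsUnit x := by
    have : IsNilpotent (x - 1) := hker _ (by rw [RingHom.mem_ker, map_sub, hx, map_one, sub_self])
    simpa only [sub_add_cancel] using this.isUnit_add_one
  refine ⟨fun x ⟨v, hv⟩ => ?_⟩
  obtain ⟨y, hy⟩ := hp ↑v⁻¹
  have hxy : IsUnit (x * y) := isUnit_of_map_eq_one _ (by rw [map_mul, ← hv, hy, v.mul_inv])
  have hyx : IsUnit (y * x) := isUnit_of_map_eq_one _ (by rw [map_mul, ← hv, hy, v.inv_mul])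
  obtain ⟨r, hr⟩ := hxy.exists_right_inv
  obtain ⟨l, hl⟩ := hyx.exists_left_inv
  exact isUnit_iff_exists_and_exists.mpr
    ⟨⟨y * r, by rw [← mul_assoc, hr]⟩, ⟨l * y, by rw [mul_assoc, hl]⟩⟩

theorem isLocalHom_of_isNilpotent_ker {A B : Type*} [Ring A] [Ring B] {p : A →+* B}
    (hp : Function.Surjective p) (hker : IsNilpotent (RingHom.ker p)) : IsLocalHom p := by
  obtain ⟨k, hk⟩ := hker
  refine isLocalHom_of_forall_mem_ker_isNilpotent hp fun x hx => ⟨k, ?_⟩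
  simpa only [hk, Submodule.zero_eq_bot, Submodule.mem_bot] using Ideal.pow_mem_pow hx k

theorem isLocalHom_mapMatrix {n R R₀ : Type*} [Fintype n] [DecidableEq n] [CommRing R]
    [CommRing R₀] (f : R →+* R₀) [IsLocalHom f] :
    IsLocalHom (f.mapMatrix : Matrix n n R →+* Matrix n n R₀) where
  map_nonunit M hM := by
    rw [Matrix.isUnit_iff_isUnit_det, ← RingHom.map_det] at hM
    exact (Matrix.isUnit_iff_isUnit_det M).mpr (hM.of_map f)

theorem mapMatrix_surjective {n R R₀ : Type*} [Fintype n] [DecidableEq n] [NonAssocSemiring R]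
    [NonAssocSemiring R₀] {f : R →+* R₀} (hf : Function.Surjective f) :
    Function.Surjective (f.mapMatrix : Matrix n n R →+* Matrix n n R₀) := fun M =>
  ⟨M.map (Function.surjInv hf), by ext i j; exact Function.surjInv_eq hf (M i j)⟩

theorem eq_zero_of_isIdempotentElem_of_map_eq_zero {A B : Type*} [Ring A] [Ring B] {p : A →+* B}
    [IsLocalHom p] {x : A} (hx : IsIdempotentElem x) (hpx : p x = 0) : x = 0 := by
  have hunit : IsUnit (1 - x) :=
    IsUnit.of_map p _ (by rw [map_sub, map_one, hpx, sub_zero]; exact isUnit_one)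
  exact sub_eq_self.mp ((IsIdempotentElem.iff_eq_one_of_isUnit hunit).mp hx.one_sub)

theorem exists_map_eq_one_and_mul_mul_eq {A B : Type*} [Ring A] [Ring B] {p : A →+* B}
    [IsLocalHom p] {e a b : A} (he : IsIdempotentElem e) (hae : a * e = a)
    (hba : p (b * a) = p e) : ∃ w : A, p w = 1 ∧ w * b * a = e := by
  have hpu : p (1 - e + b * a) = 1 := by rw [map_add, hba, ← map_add, sub_add_cancel, map_one]
  obtain ⟨u, hu⟩ : IsUnit (1 - e + b * a) := IsUnit.of_map p _ (hpu ▸ isUnit_one)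
  have hue : u * e = b * a := by
    rw [hu, add_mul, he.one_sub_mul_self, zero_add, mul_assoc, hae]
  refine ⟨↑u⁻¹, ?_, ?_⟩
  · calc p ↑u⁻¹ = p ↑u⁻¹ * p u := by rw [hu, hpu, mul_one]
      _ = 1 := by rw [← map_mul, u.inv_mul, map_one]
  · rw [mul_assoc, ← hue, u.inv_mul_cancel_left]

/-- `a` and `b` are mutually inverse isomorphisms between the idempotents `e` and `f`: left
multiplication by `a` maps `e A` onto `f A`, with inverse left multiplication by `b`. For
`e = 1 - S` and `f = 1 - T` these are the cokernels of `S` and `T`. Idempotency of `e` and `f`,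
and the relations `f * a = a` and `e * b = b`, follow from the four fields. -/
structure IsIdempotentIso {A : Type*} [Mul A] (e f a b : A) : Prop where
  right_mul_left : b * a = e
  left_mul_right : a * b = f
  left_mul : a * e = a
  right_mul : b * f = b

namespace IsIdempotentIso

section Semigroup

variable {A : Type*} [Semigroup A] {e f a b : A}

theorem mul_left (h : IsIdempotentIso e f a b) : f * a = a := by
  rw [← h.left_mul_right, mul_assoc, h.right_mul_left, h.left_mul]

theorem mul_right (h : IsIdempotentIso e f a b) : e * b = b := by
  rw [← h.right_mul_left, mul_assoc, h.left_mul_right, h.right_mul]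

end Semigroup

section Ring

variable {A B : Type*} [Ring A] [Ring B]

theorem one_sub_iff {S T a b : A} :
    IsIdempotentIso (1 - S) (1 - T) a b ↔
      a * S = 0 ∧ T * a = 0 ∧ b * T = 0 ∧ S * b = 0 ∧
        (1 - S) * (b * a - 1) = 0 ∧ (1 - T) * (a * b - 1) = 0 := by
  have expand (X x y : A) (hX : X * x = 0) :
      (1 - X) * (x * y - 1) = 0 ↔ x * y = 1 - X := by
    rw [mul_sub_one, ← mul_assoc, one_sub_mul, hX, sub_zero, sub_eq_zero]
  constructor
  · intro h
    have hSb : S * b = 0 := sub_eq_self.mp (by rw [← one_sub_mul, h.mul_right])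
    have hTa : T * a = 0 := sub_eq_self.mp (by rw [← one_sub_mul, h.mul_left])
    exact ⟨sub_eq_self.mp (by rw [← mul_one_sub, h.left_mul]), hTa,
      sub_eq_self.mp (by rw [← mul_one_sub, h.right_mul]), hSb,
      (expand S b a hSb).mpr h.right_mul_left, (expand T a b hTa).mpr h.left_mul_right⟩
  · rintro ⟨haS, hTa, hbT, hSb, hba, hab⟩
    exact ⟨(expand S b a hSb).mp hba, (expand T a b hTa).mp hab,
      by rw [mul_one_sub, haS, sub_zero], by rw [mul_one_sub, hbT, sub_zero]⟩

variable {p : A →+* B} [IsLocalHom p] {e f a b : A}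

theorem of_map_left_mul_right_eq (hf : IsIdempotentElem f) (hba : b * a = e)
    (hae : a * e = a) (hfa : f * a = a) (hbf : b * f = b) (hab : p (a * b) = p f) :
    IsIdempotentIso e f a b := by
  have hidem : IsIdempotentElem (a * b) := by
    rw [IsIdempotentElem, ← mul_assoc, mul_assoc a, hba, hae]
  have hdiff : IsIdempotentElem (f - a * b) :=
    hidem.sub hf (by rw [mul_assoc, hbf]) (by rw [← mul_assoc, hfa])
  have hzero : f - a * b = 0 :=
    eq_zero_of_isIdempotentElem_of_map_eq_zero (p := p) hdiff (by rw [map_sub, hab, sub_self])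
  exact ⟨hba, (sub_eq_zero.mp hzero).symm, hae, hbf⟩

theorem exists_lift (hp : Function.Surjective p) (he : IsIdempotentElem e)
    (hf : IsIdempotentElem f) {a₀ b₀ : B} (h : IsIdempotentIso (p e) (p f) a₀ b₀) :
    ∃ a b : A, p a = a₀ ∧ p b = b₀ ∧ IsIdempotentIso e f a b := by
  obtain ⟨a', rfl⟩ := hp a₀
  obtain ⟨b', rfl⟩ := hp b₀
  obtain ⟨a, ha⟩ : ∃ a, f * a' * e = a := ⟨_, rfl⟩
  obtain ⟨b, hb⟩ : ∃ b, b' * f = b := ⟨_, rfl⟩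
  have hpa : p a = p a' := by rw [← ha, map_mul, map_mul, h.mul_left, h.left_mul]
  have hpb : p b = p b' := by rw [← hb, map_mul, h.right_mul]
  have hae : a * e = a := by rw [← ha, mul_assoc, he.eq]
  have hfa : f * a = a := by rw [← ha, mul_assoc, ← mul_assoc f f, hf.eq]
  have hbf : b * f = b := by rw [← hb, mul_assoc, hf.eq]
  obtain ⟨w, hpw, hwba⟩ : ∃ w, p w = 1 ∧ w * b * a = e :=
    exists_map_eq_one_and_mul_mul_eq he hae (by rw [map_mul, hpa, hpb, h.right_mul_left])
  have hpwb : p (w * b) = p b' := by rw [map_mul, hpw, one_mul, hpb]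
  exact ⟨a, w * b, hpa, hpwb, of_map_left_mul_right_eq (p := p) hf hwba hae hfa
    (by rw [mul_assoc, hbf]) (by rw [map_mul, hpa, hpwb, h.left_mul_right])⟩

end Ring

end IsIdempotentIso

theorem stmt_11_general {A B : Type*} [Ring A] [Ring B] (p : A →+* B) [IsLocalHom p]
    (hp : Function.Surjective p) {S T : A} (hS : IsIdempotentElem S) (hT : IsIdempotentElem T)
    {φ₀ ψ₀ : B} (hφS : φ₀ * p S = 0) (hTφ : p T * φ₀ = 0)
    (hψT : ψ₀ * p T = 0) (hSψ : p S * ψ₀ = 0)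
    (hψφ : (1 - p S) * (ψ₀ * φ₀ - 1) = 0) (hφψ : (1 - p T) * (φ₀ * ψ₀ - 1) = 0) :
    ∃ φ ψ : A, p φ = φ₀ ∧ p ψ = ψ₀ ∧
      φ * S = 0 ∧ T * φ = 0 ∧ ψ * T = 0 ∧ S * ψ = 0 ∧
      (1 - S) * (ψ * φ - 1) = 0 ∧ (1 - T) * (φ * ψ - 1) = 0 := by
  have h₀ : IsIdempotentIso (p (1 - S)) (p (1 - T)) φ₀ ψ₀ := by
    simp only [map_sub, map_one]
    exact IsIdempotentIso.one_sub_iff.mpr ⟨hφS, hTφ, hψT, hSψ, hψφ, hφψ⟩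
  obtain ⟨φ, ψ, hφ, hψ, h⟩ := h₀.exists_lift hp hS.one_sub hT.one_sub
  exact ⟨φ, ψ, hφ, hψ, IsIdempotentIso.one_sub_iff.mp h⟩

/-- Lifting of quadruples (S, T, φ, ψ) along a surjection with nilpotent
kernel: given idempotent matrices S, T over R and matrices φ₀, ψ₀ over R₀ satisfying the
displayed identities with the images of S and T, there exist lifts φ, ψ over R satisfying
the same identities with S and T. -/
theorem stmt_11 (R R₀ : Type) [CommRing R] [CommRing R₀] (π : R →+* R₀)
    (hsurj : Function.Surjective π) (hnil : IsNilpotent (RingHom.ker π))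
    (n : ℕ) (S T : Matrix (Fin n) (Fin n) R)
    (hS : S * S = S) (hT : T * T = T)
    (φ₀ ψ₀ : Matrix (Fin n) (Fin n) R₀)
    (h1 : φ₀ * S.map π = 0) (h1' : T.map π * φ₀ = 0)
    (h2 : ψ₀ * T.map π = 0) (h2' : S.map π * ψ₀ = 0)
    (h3 : (1 - S.map π) * (ψ₀ * φ₀ - 1) = 0)
    (h3' : (1 - T.map π) * (φ₀ * ψ₀ - 1) = 0) :
    ∃ φ ψ : Matrix (Fin n) (Fin n) R,
      φ.map π = φ₀ ∧ ψ.map π = ψ₀ ∧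
      φ * S = 0 ∧ T * φ = 0 ∧ ψ * T = 0 ∧ S * ψ = 0 ∧
      (1 - S) * (ψ * φ - 1) = 0 ∧ (1 - T) * (φ * ψ - 1) = 0 := by
  have : IsLocalHom π := isLocalHom_of_isNilpotent_ker hsurj hnil
  have : IsLocalHom (π.mapMatrix (m := Fin n)) := isLocalHom_mapMatrix π
  exact stmt_11_general π.mapMatrix (mapMatrix_surjective hsurj) hS hT h1 h1' h2 h2' h3 h3'
end

section
/- Let R be a commutative ring, F := R[X₁,…,X_N], let f₁,…,f_q ∈ F, let J ⊆ F be the ideal they generate, S := F/J, ∂ : J/J² → S ⊗_F Ω_{F/R} the conormal map, and H ⊆ F the ideal of all h ∈ F such that scalar multiplication by h on J/J² factors through ∂. Fix p with 1 ≤ p ≤ min(q, N), strictly increasing indices 1 ≤ α₁ < ⋯ < α_p ≤ q and 1 ≤ β₁ < ⋯ < β_p ≤ N, let J_α ⊆ F be the ideal generated by f_{α₁},…,f_{α_p}, and let δ := det( ∂f_{α_j}/∂X_{β_i} )_{1≤i,j≤p} be the corresponding p×p minor of the Jacobian matrix. Then for every x ∈ F with x·J ⊆ J_α, one has x·δ ∈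 H. (Consequently Elkik's ideal H_S = Σ_p Σ_α Δ_α·(J_α : J) is contained in H = H_R(F,J).) -/
/-- `elkikH R N J` is, for an ideal `J` of `F := R[X₁,…,X_N]` with `S := F/J`, the set (in
fact ideal) of all `h ∈ F` such that scalar multiplication by `h` on the conormal module
`J/J²` factors through the conormal map `∂ : J/J² → S ⊗_F Ω_{F/R}`; equivalently (since
`J/J²` is an `S`-module) such that there is an `F`-linear map `ψ : Ω_{F/R} → J/J²` with
`ψ(dx) = h·(x mod J²)` for every `x ∈ J`.  It equals `Ann_F Ext¹_S(𝕃_{S/R}, J/J²)`, the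
ideal denoted `H_R(F,J)` in the paper. -/
def elkikH (R : Type) [CommRing R] (N : ℕ) (J : Ideal (MvPolynomial (Fin N) R)) :
    Set (MvPolynomial (Fin N) R) :=
  { h | ∃ ψ : KaehlerDifferential R (MvPolynomial (Fin N) R) →ₗ[MvPolynomial (Fin N) R]
          J.Cotangent,
      ∀ x : J, ψ (KaehlerDifferential.D R (MvPolynomial (Fin N) R)
          (x : MvPolynomial (Fin N) R)) = h • J.toCotangent x }

/-!
Cramer's rule turns the derivations `∂/∂X_{β i}` into a derivation `E : F → J/J²` which sends each
`f_{α j}` to `δ · [f_{α j}]`. Since `J` annihilates `J/J²`, the Leibniz rule makes `E` linear on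
`J`, so `E` is `δ · [-]` on all of `J_α`. For `y ∈ J` the element `x y` lies in `J_α`, whence
`x · E y = E (x y) = x δ · [y]`, and `x • E` factors through the universal derivation.
-/

open scoped KaehlerDifferential

section Derivation

variable {R A M ι : Type*} [CommRing R] [CommRing A] [Algebra R A] [AddCommGroup M] [Module A M]
  [Module R M]

/-- The `A`-linear map `J → M` obtained by restricting a derivation `E : A → M` to an ideal `J`
that annihilates `M`. Linearity makes its values on `J` computable from generators. -/
def derivationRestrict (E : Derivation R A M) {J : Ideal A} (hM : Module.IsTorsionBySet A M J) :
    J →ₗ[A] M where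
  toFun y := E y
  map_add' y z := E.map_add y z
  map_smul' a y := by
    have hy : (y : A) • E a = 0 := @hM (E a) y
    simp [hy]

theorem smul_derivation_eq_of_mem_colon_span {J : Ideal A} (hM : Module.IsTorsionBySet A M J)
    {E : Derivation R A M} {φ : J →ₗ[A] M} {g : ι → J} (hE : ∀ j, E (g j) = φ (g j)) {x : A}
    (hx : x ∈ (Ideal.span (Set.range fun j => (g j : A))).colon (J : Set A)) (y : J) :
    x • E y = x • φ y := by
  have eqOn_span : Set.EqOn (derivationRestrict E hM) φ (Submodule.span A (Set.range g)) :=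
    LinearMap.eqOn_span' (Set.forall_mem_range.mpr hE)
  have hxy : x • y ∈ Submodule.span A (Set.range g) := by
    rw [← Submodule.apply_mem_span_image_iff_mem_span (f := J.subtype) J.subtype_injective,
      ← Set.range_comp]
    exact Submodule.mem_colon.mp hx y y.2
  calc x • E y = derivationRestrict E hM (x • y) := ((derivationRestrict E hM).map_smul x y).symm
    _ = φ (x • y) := eqOn_span hxy
    _ = x • φ y := φ.map_smul x y

theorem derivation_sum_apply (s : Finset ι) (D : ι → Derivation R A M) (a : A) :
    (∑ i ∈ s, D i) a = ∑ i ∈ s, D i a := by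
  rw [← Derivation.coeFnAddMonoidHom_apply, map_sum, Finset.sum_apply]
  rfl

variable [Fintype ι] [DecidableEq ι]

theorem sum_adjugate_smul_derivation_apply (D : ι → Derivation R A A) (g : ι → A) (k j : ι) :
    (∑ i, (Matrix.of fun i j => D i (g j)).adjugate k i • D i) (g j) =
      if k = j then (Matrix.of fun i j => D i (g j)).det else 0 := by
  have adjugate_mul_apply := congr_fun₂ (Matrix.of fun i j => D i (g j)).adjugate_mul k j
  simpa [Matrix.mul_apply, Matrix.one_apply, derivation_sum_apply] using adjugate_mul_apply

theorem exists_derivation_apply_eq_det_smul [IsScalarTower R A M] (D : ι → Derivation R A A)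
    (g : ι → A) (m : ι → M) :
    ∃ E : Derivation R A M, ∀ j, E (g j) = (Matrix.of fun i j => D i (g j)).det • m j := by
  let D' (k : ι) : Derivation R A A := ∑ i, (Matrix.of fun i j => D i (g j)).adjugate k i • D i
  have hD' (k j : ι) : D' k (g j) = if k = j then (Matrix.of fun i j => D i (g j)).det else 0 :=
    sum_adjugate_smul_derivation_apply D g k j
  refine ⟨∑ k, (LinearMap.toSpanSingleton A M (m k)).compDer (D' k), fun j => ?_⟩
  simp [derivation_sum_apply, hD', ite_smul]

end Derivation

theorem stmt_14_general {R A ι : Type*} [CommRing R] [CommRing A] [Algebra R A] [Fintype ι]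
    [DecidableEq ι] {J : Ideal A} (g : ι → J) (D : ι → Derivation R A A) {x : A}
    (hx : x ∈ (Ideal.span (Set.range fun j => (g j : A))).colon (J : Set A)) :
    ∃ ψ : Ω[A⁄R] →ₗ[A] J.Cotangent, ∀ y : J, ψ (KaehlerDifferential.D R A y) =
      (x * (Matrix.of fun i j => D i (g j)).det) • J.toCotangent y := by
  obtain ⟨E, hE⟩ := exists_derivation_apply_eq_det_smul D (fun j => (g j : A))
    fun j => J.toCotangent (g j)
  set δ := (Matrix.of fun i j => D i (g j)).det
  refine ⟨(x • E).liftKaehlerDifferential, fun y => ?_⟩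
  calc (x • E).liftKaehlerDifferential (KaehlerDifferential.D R A y)
      = x • E y := (x • E).liftKaehlerDifferential_comp_D y
    _ = x • δ • J.toCotangent y :=
      smul_derivation_eq_of_mem_colon_span (φ := δ • J.toCotangent) J.isTorsionBySet_cotangent
        hE hx y
    _ = (x * δ) • J.toCotangent y := smul_smul x δ _

/-- With `J ⊆ F = R[X₁,…,X_N]` generated by `f₁,…,f_q`, for strictly
increasing index maps `α : Fin p → Fin q`, `β : Fin p → Fin N` (with `1 ≤ p`), let `J_α` be
the ideal generated by the `f_{α j}` and `δ` the corresponding `p × p` minor of the Jacobian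
matrix. Then for every `x ∈ F` with `x·J ⊆ J_α` one has `x·δ ∈ H_R(F,J)`. -/
theorem stmt_14 (R : Type) [CommRing R] (N q : ℕ)
    (f : Fin q → MvPolynomial (Fin N) R)
    (p : ℕ) (hp : 1 ≤ p)
    (α : Fin p → Fin q) (hα : StrictMono α)
    (β : Fin p → Fin N) (hβ : StrictMono β)
    (x : MvPolynomial (Fin N) R)
    (hx : ∀ y ∈ Ideal.span (Set.range f), x * y ∈ Ideal.span (Set.range (f ∘ α))) :
    x * Matrix.det (Matrix.of fun i j : Fin p => MvPolynomial.pderiv (β i) (f (α j)))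
      ∈ elkikH R N (Ideal.span (Set.range f)) := by
  have hfα (j : Fin p) : f (α j) ∈ Ideal.span (Set.range f) := Ideal.subset_span ⟨α j, rfl⟩
  exact stmt_14_general (fun j => ⟨f (α j), hfα j⟩) (fun i => MvPolynomial.pderiv (β i))
    (Submodule.mem_colon.mpr hx)
end
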